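/- arXiv:2205.00059 — 5 statements merged into one kernel-verified Lean document; each statement's English description precedes it below -/
import Mathlib

section
/- Let λ > 0 and β ∈ (0,1]. For all n, k ∈ ℕ₀, ∫_ℝ (d^k/dx^k C_n^{λ,β})(x) dπ_{λ,β}(x) equals k! s(n,k) if k ≤ n, and equals 0 if k > n, where s(n,k) are the Stirling numbers of the first kind and d^k/dx^k denotes the k-th derivative of the polynomial C_n^{λ,β}. -/
/-!
The factorial moments of `π_{λ,β}` come from Taylor's formula for the entire function `E_β`: with
`(x)_m = x (x-1) ⋯ (x-m+1)`, expanding `E_β⁽ᵐ⁾` about `-λ` and evaluating at `0` gives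
`∫ (x)_m dπ = λᵐ E_β⁽ᵐ⁾(0) = (d/dz)ᵐ E_β(λz)` at `z = 0` (`factorialMoment`). Differentiating
`e^{x log(1+z)}` in `x` brings down a factor `log(1+z)` (`iteratedDeriv_param`), and by the Leibniz
rule `(d/dx)ᵏ C_n(x) = ∑_i binom(n,i) (x)_i D^{n-i}[log(1+z)ᵏ / E_β(λz)]` at `z = 0`. Integrating and
reading the Leibniz rule backwards, the integral is `Dⁿ[E_β(λz) · log(1+z)ᵏ / E_β(λz)]` at `z = 0`, i.e.
`Dⁿ[log(1+z)ᵏ](0)`, which is `k! s(n,k)` and vanishes for `n < k`.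

The analytic input is that the weights of `π_{λ,β}` are nonnegative, i.e. that `x ↦ E_β(-x)` is
completely monotone (`iteratedDeriv_mittagLefflerR_nonneg`); otherwise the truncation
`ENNReal.ofReal` in the definition of the measure would change it. The proof is by discretisation:
writing `(1-z)^β = 1 - p(z)` with `p` having nonnegative coefficients, the coefficients in `z` of
`(1-z)^(β-1) / ((1-z)^β + x)^(k+1)` are nonnegative for `x > 0` (`discML_nonneg`). For `0 < x < 1`
they also have the expansion `∑_j binom(j+k,k) (-x)ʲ [zⁿ](1-z)^(-1-β(j+k))` in powers of `x`.
Replacing `x` by `x n^(-β)` and letting `n → ∞`, Euler's product for `Γ` turns this into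
`E_β⁽ᵏ⁾(-x) / k!` up to the factor `n^(βk)`. Euler's products decrease in `n`
(`negBinom_antitone`), which provides the dominating series.
-/

open MeasureTheory Finset
open scoped ENNReal NNReal

noncomputable section

/-- The complex Mittag-Leffler function `E_β(z) = ∑ zⁿ / Γ(βn+1)`. -/
def mittagLeffler (β : ℝ) (z : ℂ) : ℂ :=
  ∑' n : ℕ, z ^ n / (Complex.Gamma ((β * n + 1 : ℝ) : ℂ))

/-- The real Mittag-Leffler function `E_β(x) = ∑ xⁿ / Γ(βn+1)`. -/
def mittagLefflerR (β : ℝ) (x : ℝ) : ℝ :=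
  ∑' n : ℕ, x ^ n / Real.Gamma (β * n + 1)

/-- The fractional Poisson measure `π_{λ,β} = ∑_k (λᵏ/k!) E_β⁽ᵏ⁾(-λ) δ_k` on `ℝ`. -/
def fracPoisson (lam β : ℝ) : Measure ℝ :=
  Measure.sum fun k : ℕ =>
    ENNReal.ofReal (lam ^ k / k.factorial * iteratedDeriv k (mittagLefflerR β) (-lam)) •
      Measure.dirac (k : ℝ)

/-- The Poisson measure with rate `μ` on `ℝ`, `π_μ({k}) = (μᵏ/k!) e^{-μ}`. -/
def poissonMeasureR (μ : ℝ) : Measure ℝ :=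
  Measure.sum fun k : ℕ =>
    ENNReal.ofReal (μ ^ k / k.factorial * Real.exp (-μ)) • Measure.dirac (k : ℝ)

/-- The generalized Appell polynomials
`C_n^{λ,β}(x) = dⁿ/dzⁿ [e^{x log(1+z)} / E_β(λz)]` at `z = 0`. -/
def genAppell (lam β : ℝ) (n : ℕ) (x : ℂ) : ℂ :=
  iteratedDeriv n
    (fun z : ℂ => Complex.exp (x * Complex.log (1 + z)) / mittagLeffler β (lam * z)) 0

/-- The Appell polynomials `A_n^{λ,β}(x) = dⁿ/dzⁿ [e^{zx} / E_β(λ(eᶻ-1))]` at `z = 0`. -/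
def appell (lam β : ℝ) (n : ℕ) (x : ℂ) : ℂ :=
  iteratedDeriv n
    (fun z : ℂ => Complex.exp (z * x) / mittagLeffler β (lam * (Complex.exp z - 1))) 0

/-- Stirling numbers of the first kind, via `(log(1+z))^k = k! ∑_{n≥k} s(n,k) zⁿ/n!`. -/
def stirlingFst (n k : ℕ) : ℝ :=
  iteratedDeriv n (fun x : ℝ => (Real.log (1 + x)) ^ k) 0 / k.factorial

/-- Stirling numbers of the second kind, via `(eᶻ-1)^k = k! ∑_{n≥k} S(n,k) zⁿ/n!`. -/
def stirlingSnd (n k : ℕ) : ℝ :=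
  iteratedDeriv n (fun x : ℝ => (Real.exp x - 1) ^ k) 0 / k.factorial

/-- The `n`-th moment of the fractional Poisson measure. -/
def fpMoment (lam β : ℝ) (n : ℕ) : ℝ := ∫ x, x ^ n ∂(fracPoisson lam β)

/-- `M̃_{λ,β}(m) = m! λᵐ / Γ(mβ+1)`. -/
def tildeM (lam β : ℝ) (m : ℕ) : ℝ := m.factorial * lam ^ m / Real.Gamma (m * β + 1)

/-- The (partial exponential) Bell polynomials `B_{n,k}(x₁, …, x_{n-k+1})`. -/
def bellPoly (n k : ℕ) (x : ℕ → ℂ) : ℂ :=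
  ∑ j ∈ (Fintype.piFinset fun _ : Fin (n - k + 1) => Finset.range (n + 1)).filter
      (fun j => (∑ i, j i) = k ∧ (∑ i, (i.1 + 1) * j i) = n),
    (n.factorial : ℂ) / (∏ i, ((j i).factorial : ℂ)) *
      ∏ i, (x (i.1 + 1) / ((i.1 + 1).factorial : ℂ)) ^ j i


open Filter Topology

/-! ### Coefficients of `(1 - z)^(-a)` -/

/-- The coefficient of `zⁿ` in `(1 - z)^(-a)`, i.e. `a (a+1) ⋯ (a+n-1) / n!`. -/
def negBinom (a : ℝ) (n : ℕ) : ℝ := ∏ i ∈ range n, (a + i) / (i + 1)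

lemma negBinom_zero (a : ℝ) : negBinom a 0 = 1 := by simp [negBinom]

lemma negBinom_succ (a : ℝ) (n : ℕ) : (n + 1 : ℝ) * negBinom a (n + 1) = (a + n) * negBinom a n := by
  have : (n + 1 : ℝ) ≠ 0 := by positivity
  rw [negBinom, prod_range_succ, ← negBinom]
  field_simp

lemma negBinom_nonneg {a : ℝ} (ha : 0 ≤ a) (n : ℕ) : 0 ≤ negBinom a n :=
  prod_nonneg fun i _ => by positivity

lemma negBinom_pos {a : ℝ} (ha : 0 < a) (n : ℕ) : 0 < negBinom a n :=
  prod_pos fun i _ => by positivity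

/-- `(1 - z)^β = 1 - ∑_{i ≥ 1} p_i zⁱ` with all `p_i ≥ 0` when `0 < β ≤ 1`. -/
lemma negBinom_neg_succ_nonpos {β : ℝ} (hβ0 : 0 < β) (hβ1 : β ≤ 1) (n : ℕ) :
    negBinom (-β) (n + 1) ≤ 0 := by
  rw [negBinom, prod_range_succ']
  refine mul_nonpos_of_nonneg_of_nonpos (prod_nonneg fun i _ => ?_) ?_
  · have : (0 : ℝ) ≤ i := by positivity
    refine div_nonneg ?_ (by positivity)
    push_cast
    linarith
  · simp [hβ0.le]

/-- The Vandermonde identity, expressing `(1-z)^(-a) (1-z)^(-b) = (1-z)^(-(a+b))`. -/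
lemma negBinom_add (a b : ℝ) (n : ℕ) :
    ∑ p ∈ antidiagonal n, negBinom a p.1 * negBinom b p.2 = negBinom (a + b) n := by
  induction n with
  | zero => simp [negBinom_zero]
  | succ n ih =>
    have hn : (n + 1 : ℝ) ≠ 0 := by positivity
    apply mul_left_cancel₀ hn
    rw [negBinom_succ, ← ih, mul_sum, mul_sum]
    -- Split the weight `n + 1 = p.1 + p.2` and lower one index in each half.
    have h1 : ∑ p ∈ antidiagonal (n + 1), (p.1 : ℝ) * (negBinom a p.1 * negBinom b p.2)
        = ∑ p ∈ antidiagonal n, (a + p.1) * (negBinom a p.1 * negBinom b p.2) := by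
      rw [Nat.sum_antidiagonal_succ]
      simp only [Nat.cast_zero, zero_mul, zero_add]
      refine sum_congr rfl fun p _ => ?_
      rw [← mul_assoc, ← mul_assoc, ← negBinom_succ]
      push_cast
      rfl
    have h2 : ∑ p ∈ antidiagonal (n + 1), (p.2 : ℝ) * (negBinom a p.1 * negBinom b p.2)
        = ∑ p ∈ antidiagonal n, (b + p.2) * (negBinom a p.1 * negBinom b p.2) := by
      rw [Nat.sum_antidiagonal_succ']
      simp only [Nat.cast_zero, zero_mul, zero_add]
      refine sum_congr rfl fun p _ => ?_
      have := negBinom_succ b p.2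
      push_cast
      linear_combination (negBinom a p.1) * this
    have h3 : ∑ p ∈ antidiagonal (n + 1), (n + 1 : ℝ) * (negBinom a p.1 * negBinom b p.2)
        = ∑ p ∈ antidiagonal (n + 1), (p.1 : ℝ) * (negBinom a p.1 * negBinom b p.2)
        + ∑ p ∈ antidiagonal (n + 1), (p.2 : ℝ) * (negBinom a p.1 * negBinom b p.2) := by
      rw [← sum_add_distrib]
      refine sum_congr rfl fun p hp => ?_
      have : (p.1 : ℝ) + p.2 = n + 1 := by exact_mod_cast mem_antidiagonal.1 hp
      rw [← this]; ring
    rw [h3, h1, h2, ← sum_add_distrib]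
    refine sum_congr rfl fun p hp => ?_
    have : (p.1 : ℝ) + p.2 = n := by exact_mod_cast mem_antidiagonal.1 hp
    rw [← this]; ring

lemma negBinom_one_add_le {y : ℝ} (hy : 0 ≤ y) (n : ℕ) : negBinom (1 + y) n ≤ (1 + y) ^ n := by
  rw [negBinom, ← card_range n, ← prod_const, card_range]
  refine prod_le_prod (fun i _ => by positivity) fun i _ => ?_
  rw [div_le_iff₀ (by positivity)]
  have : (0 : ℝ) ≤ y * i := by positivity
  linarith

/-- Euler's product: `negBinom (1 + y) n · n^(-y) → 1 / Γ(y + 1)`. -/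
lemma tendsto_negBinom {y : ℝ} (hy : 0 ≤ y) :
    Tendsto (fun n : ℕ => negBinom (1 + y) n * (n : ℝ) ^ (-y)) atTop
      (𝓝 (1 / Real.Gamma (y + 1))) := by
  have hG : Real.Gamma (y + 1) ≠ 0 := (Real.Gamma_pos_of_pos (by linarith)).ne'
  have h1 := (Real.GammaSeq_tendsto_Gamma (y + 1)).inv₀ hG
  have h2 : Tendsto (fun n : ℕ => (n : ℝ) / (n + (y + 1))) atTop (𝓝 1) :=
    tendsto_natCast_div_add_atTop (y + 1)
  have h3 := h2.mul h1
  rw [one_mul, ← one_div] at h3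
  refine h3.congr' ?_
  filter_upwards [eventually_gt_atTop 0] with n hn
  have hn' : (0 : ℝ) < n := by exact_mod_cast hn
  have hp : ∏ j ∈ range n, (y + 1 + (j : ℝ)) ≠ 0 :=
    (prod_pos fun j _ => by positivity).ne'
  have hf : (n.factorial : ℝ) ≠ 0 := by positivity
  have hr : (n : ℝ) ^ y ≠ 0 := (Real.rpow_pos_of_pos hn' _).ne'
  have hs : (n : ℝ) + (y + 1) ≠ 0 := by positivity
  have hs' : y + 1 + (n : ℝ) ≠ 0 := by positivity
  have hfac : ∏ i ∈ range n, ((i : ℝ) + 1) = n.factorial := by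
    rw [← prod_range_add_one_eq_factorial]; push_cast; rfl
  rw [Real.GammaSeq, negBinom, prod_div_distrib, hfac, prod_range_succ, Real.rpow_neg hn'.le,
    Real.rpow_add_one hn'.ne', add_comm 1 y]
  field_simp
  ring

/-- The Euler products `negBinom (1 + y) n · n^(-y)` decrease in `n`; this gives domination of
the tail of the sequence by any one of its members. -/
lemma negBinom_antitone {y : ℝ} (hy : 0 ≤ y) {N n : ℕ} (hN : 0 < N) (hn : N ≤ n) :
    negBinom (1 + y) n * (n : ℝ) ^ (-y) ≤ negBinom (1 + y) N * (N : ℝ) ^ (-y) := by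
  induction n, hn using Nat.le_induction with
  | base => rfl
  | succ n hn ih =>
    refine le_trans ?_ ih
    have hn0 : (0 : ℝ) < n := by exact_mod_cast hN.trans_le hn
    have hu := negBinom_succ (1 + y) n
    have hu' : negBinom (1 + y) (n + 1) = negBinom (1 + y) n * (1 + y / (n + 1)) := by
      field_simp
      linear_combination hu
    have key : (1 + y / (n + 1)) * ((n + 1 : ℕ) : ℝ) ^ (-y) ≤ (n : ℝ) ^ (-y) := by
      have e1 : 1 + y / (n + 1) ≤ Real.exp (y / (n + 1)) := by
        linarith [Real.add_one_le_exp (y / (n + 1 : ℝ))]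
      have hlog : Real.log n - Real.log (n + 1) ≤ -(1 / (n + 1 : ℝ)) := by
        rw [← Real.log_div (by positivity) (by positivity)]
        refine (Real.log_le_sub_one_of_pos (by positivity)).trans (le_of_eq ?_)
        field_simp
        ring
      rw [Real.rpow_def_of_pos (by positivity), Real.rpow_def_of_pos hn0]
      refine (mul_le_mul_of_nonneg_right e1 (Real.exp_pos _).le).trans ?_
      rw [← Real.exp_add]
      apply Real.exp_le_exp.2
      push_cast
      have := mul_le_mul_of_nonneg_left hlog hy
      have e : y / (n + 1 : ℝ) = y * (1 / (n + 1)) := by ring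
      rw [e]
      nlinarith
    rw [hu', mul_assoc]
    exact mul_le_mul_of_nonneg_left key (negBinom_nonneg (by linarith) n)

/-! ### Nonnegativity for the discretised Mittag-Leffler function -/

/-- `discML β x (k+1) n` is the coefficient of `zⁿ` in `(1-z)^(β-1) / ((1-z)^β + x)^(k+1)`, expanded
in powers of `x` (the series converges for `|x| < 1`); `discML β x 0 n` is the coefficient of `zⁿ` in
`(1-z)^(β-1)`. -/
def discML (β x : ℝ) : ℕ → ℕ → ℝ
  | 0, n => negBinom (1 - β) n
  | k + 1, n => ∑' j : ℕ, ((j + k).choose k : ℝ) * (-x) ^ j * negBinom (1 + β * (j + k : ℕ)) n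

lemma summable_discML_aux {β : ℝ} (hβ0 : 0 < β) (hβ1 : β ≤ 1) {x : ℝ} (hx0 : 0 < x) (hx1 : x < 1)
    (k n : ℕ) :
    Summable fun j : ℕ => ((j + k).choose k : ℝ) * x ^ j * negBinom (1 + β * (j + k : ℕ)) n := by
  have h1 : Summable fun j : ℕ => (j : ℝ) ^ (k + n) * x ^ j :=
    summable_pow_mul_geometric_of_norm_lt_one (k + n) (by rwa [Real.norm_of_nonneg hx0.le])
  have h2 := ((summable_nat_add_iff (k + 1)).2 h1).mul_right (x ^ (k + 1))⁻¹
  refine Summable.of_nonneg_of_le (fun j => ?_) (fun j => ?_) h2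
  · have := negBinom_nonneg (a := 1 + β * (j + k : ℕ)) (by positivity) n
    positivity
  · have hc : ((j + k).choose k : ℝ) ≤ ((j + (k + 1) : ℕ) : ℝ) ^ k := by
      have := (Nat.choose_le_pow (j + k) k).trans (Nat.pow_le_pow_left (Nat.le_succ (j + k)) k)
      exact_mod_cast this
    have hu : negBinom (1 + β * (j + k : ℕ)) n ≤ ((j + (k + 1) : ℕ) : ℝ) ^ n := by
      refine (negBinom_one_add_le (by positivity) n).trans ?_
      gcongr
      have : β * (j + k : ℕ) ≤ 1 * (j + k : ℕ) := by gcongr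
      push_cast at this ⊢
      linarith
    have h0 : 0 ≤ negBinom (1 + β * (j + k : ℕ)) n := negBinom_nonneg (by positivity) n
    calc _ ≤ ((j + (k + 1) : ℕ) : ℝ) ^ k * x ^ j * ((j + (k + 1) : ℕ) : ℝ) ^ n := by gcongr
      _ = _ := by
        rw [pow_add x j, pow_add _ k n]
        field_simp

lemma summable_discML {β : ℝ} (hβ0 : 0 < β) (hβ1 : β ≤ 1) {x : ℝ} (hx0 : 0 < x) (hx1 : x < 1)
    (k n : ℕ) :
    Summable fun j : ℕ => ((j + k).choose k : ℝ) * (-x) ^ j * negBinom (1 + β * (j + k : ℕ)) n := by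
  refine Summable.of_norm ((summable_discML_aux hβ0 hβ1 hx0 hx1 k n).congr fun j => ?_)
  rw [norm_mul, norm_mul, norm_pow, norm_neg, Real.norm_of_nonneg hx0.le,
    Real.norm_of_nonneg (by positivity), Real.norm_of_nonneg (negBinom_nonneg (by positivity) n)]

/-- Multiplying the generating function of `discML β x (k+1)` by `(1-z)^β + x` gives that of
`discML β x k`. -/
lemma discML_rec {β : ℝ} (hβ0 : 0 < β) (hβ1 : β ≤ 1) {x : ℝ} (hx0 : 0 < x) (hx1 : x < 1)
    (k n : ℕ) :
    ∑ p ∈ antidiagonal n, negBinom (-β) p.1 * discML β x (k + 1) p.2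
      = -x * discML β x (k + 1) n + discML β x k n := by
  have hs := summable_discML hβ0 hβ1 hx0 hx1
  have h1 : ∑ p ∈ antidiagonal n, negBinom (-β) p.1 * discML β x (k + 1) p.2
      = ∑' j : ℕ, ((j + k).choose k : ℝ) * (-x) ^ j *
          negBinom (1 - β + β * (j + k : ℕ)) n := by
    simp only [discML, ← tsum_mul_left]
    rw [← Summable.tsum_finsetSum (f := fun (p : ℕ × ℕ) (j : ℕ) => negBinom (-β) p.1 *
      (((j + k).choose k : ℝ) * (-x) ^ j * negBinom (1 + β * (j + k : ℕ)) p.2))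
      fun p _ => (hs k p.2).mul_left (negBinom (-β) p.1)]
    congr 1
    ext j
    rw [show 1 - β + β * (j + k : ℕ) = -β + (1 + β * (j + k : ℕ)) by ring, ← negBinom_add, mul_sum]
    exact sum_congr rfl fun p _ => by ring
  rw [h1]
  cases k with
  | zero =>
    have hs0 : Summable fun j : ℕ => ((j + 0).choose 0 : ℝ) * (-x) ^ j *
          negBinom (1 - β + β * (j + 0 : ℕ)) n := by
      rw [← summable_nat_add_iff 1]
      refine ((hs 0 n).mul_left (-x)).congr fun j => ?_
      rw [show 1 - β + β * (j + 1 + 0 : ℕ) = 1 + β * (j + 0 : ℕ) by push_cast; ring]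
      simp only [Nat.choose_zero_right]
      ring
    rw [hs0.tsum_eq_zero_add, add_comm]
    simp only [discML, ← tsum_mul_left]
    congr 1
    · congr 1
      ext j
      rw [show 1 - β + β * (j + 1 + 0 : ℕ) = 1 + β * (j + 0 : ℕ) by push_cast; ring]
      simp only [Nat.choose_zero_right]
      ring
    · simp
  | succ k =>
    -- Pascal's rule separates the two terms on the right.
    have hA : Summable fun j : ℕ => ((j + k).choose (k + 1) : ℝ) * (-x) ^ j *
        negBinom (1 + β * (j + k : ℕ)) n := by
      rw [← summable_nat_add_iff 1]
      refine ((hs (k + 1) n).mul_left (-x)).congr fun j => ?_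
      rw [show j + 1 + k = j + (k + 1) by ring]
      ring
    have hsplit : ∀ j : ℕ, ((j + (k + 1)).choose (k + 1) : ℝ) * (-x) ^ j *
        negBinom (1 - β + β * (j + (k + 1) : ℕ)) n =
        ((j + k).choose (k + 1) : ℝ) * (-x) ^ j * negBinom (1 + β * (j + k : ℕ)) n
        + ((j + k).choose k : ℝ) * (-x) ^ j * negBinom (1 + β * (j + k : ℕ)) n := by
      intro j
      rw [show 1 - β + β * (j + (k + 1) : ℕ) = 1 + β * (j + k : ℕ) by push_cast; ring,
        show j + (k + 1) = (j + k) + 1 by ring, Nat.choose_succ_succ]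
      push_cast
      ring
    simp_rw [hsplit]
    rw [hA.tsum_add (hs k n), hA.tsum_eq_zero_add]
    simp only [discML, ← tsum_mul_left]
    congr 1
    rw [zero_add, Nat.choose_eq_zero_of_lt (Nat.lt_succ_self k)]
    simp only [Nat.cast_zero, zero_mul, zero_add]
    congr 1
    ext j
    rw [show j + 1 + k = j + (k + 1) by ring]
    ring

lemma discML_nonneg {β : ℝ} (hβ0 : 0 < β) (hβ1 : β ≤ 1) {x : ℝ} (hx0 : 0 < x) (hx1 : x < 1)
    (k n : ℕ) : 0 ≤ discML β x k n := by
  induction k generalizing n with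
  | zero => exact negBinom_nonneg (by linarith) n
  | succ k ihk =>
    induction n using Nat.strong_induction_on with
    | _ n ihn =>
      have hrec := discML_rec hβ0 hβ1 hx0 hx1 k n
      have hk := ihk n
      have h : 0 ≤ (1 + x) * discML β x (k + 1) n := by
        cases n with
        | zero =>
          simp only [Nat.antidiagonal_zero, sum_singleton, negBinom_zero] at hrec
          linarith
        | succ n =>
          rw [Nat.sum_antidiagonal_succ] at hrec
          simp only [negBinom_zero] at hrec
          have : ∑ p ∈ antidiagonal n, negBinom (-β) (p.1 + 1) * discML β x (k + 1) p.2 ≤ 0 := by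
            refine sum_nonpos fun p hp => mul_nonpos_of_nonpos_of_nonneg
              (negBinom_neg_succ_nonpos hβ0 hβ1 _) (ihn _ ?_)
            have := mem_antidiagonal.1 hp
            omega
          linarith
      exact nonneg_of_mul_nonneg_right h (by linarith)

/-- The sum, which is `E_β⁽ᵏ⁾(-x) / k!`, is the limit as `n → ∞` of the nonnegative numbers
`n^(-βk) discML β (x n^(-β)) (k+1) n`. -/
lemma tsum_mittagLeffler_nonneg {β : ℝ} (hβ0 : 0 < β) (hβ1 : β ≤ 1) {x : ℝ} (hx0 : 0 < x) (k : ℕ) :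
    0 ≤ ∑' j : ℕ, ((j + k).choose k : ℝ) * (-x) ^ j * (1 / Real.Gamma (β * (j + k : ℕ) + 1)) := by
  have hlim : Tendsto (fun n : ℕ => x * (n : ℝ) ^ (-β)) atTop (𝓝 0) := by
    simpa using ((tendsto_rpow_neg_atTop hβ0).comp tendsto_natCast_atTop_atTop).const_mul x
  obtain ⟨N, hN⟩ := ((hlim.eventually_lt_const one_pos).and (eventually_gt_atTop 0)).exists_forall_of_atTop
  obtain ⟨-, hN0⟩ := hN N le_rfl
  -- Splitting off `n^(-βk)`, the remaining power of `n` rescales the variable `y`.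
  have hscale : ∀ (n : ℕ), 0 < n → ∀ (y : ℝ) (j : ℕ),
      ((j + k).choose k : ℝ) * y ^ j *
        (negBinom (1 + β * (j + k : ℕ)) n * (n : ℝ) ^ (-(β * (j + k : ℕ))))
      = (n : ℝ) ^ (-(β * k)) * (((j + k).choose k : ℝ) * (y * (n : ℝ) ^ (-β)) ^ j *
        negBinom (1 + β * (j + k : ℕ)) n) := by
    intro n hn y j
    have hn' : (0 : ℝ) < n := by exact_mod_cast hn
    rw [show -(β * (j + k : ℕ)) = -(β * k) + (-β) * (j : ℝ) by push_cast; ring,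
      Real.rpow_add hn', Real.rpow_mul_natCast hn'.le, mul_pow]
    ring
  have hT : Tendsto (fun n : ℕ => ∑' j : ℕ, ((j + k).choose k : ℝ) * (-x) ^ j *
        (negBinom (1 + β * (j + k : ℕ)) n * (n : ℝ) ^ (-(β * (j + k : ℕ))))) atTop
      (𝓝 (∑' j : ℕ, ((j + k).choose k : ℝ) * (-x) ^ j *
        (1 / Real.Gamma (β * (j + k : ℕ) + 1)))) := by
    refine tendsto_tsum_of_dominated_convergence (bound := fun j : ℕ =>
      ((j + k).choose k : ℝ) * x ^ j *
        (negBinom (1 + β * (j + k : ℕ)) N * (N : ℝ) ^ (-(β * (j + k : ℕ))))) ?_ ?_ ?_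
    · simp_rw [hscale N hN0 x]
      have hN' : (0 : ℝ) < N := by exact_mod_cast hN0
      exact (summable_discML_aux hβ0 hβ1 (mul_pos hx0 (Real.rpow_pos_of_pos hN' _))
        (hN N le_rfl).1 k N).mul_left _
    · intro j
      exact (tendsto_negBinom (by positivity)).const_mul _
    · filter_upwards [eventually_ge_atTop N] with n hn j
      have h0 := negBinom_nonneg (a := 1 + β * (j + k : ℕ)) (by positivity) n
      rw [norm_mul, norm_mul, norm_pow, norm_neg, Real.norm_of_nonneg hx0.le,
        Real.norm_of_nonneg (by positivity), Real.norm_of_nonneg (by positivity)]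
      exact mul_le_mul_of_nonneg_left (negBinom_antitone (by positivity) hN0 hn) (by positivity)
  refine ge_of_tendsto hT ?_
  filter_upwards [eventually_ge_atTop N] with n hn
  obtain ⟨h1, h2⟩ := hN n hn
  have hn' : (0 : ℝ) < n := by exact_mod_cast h2
  simp_rw [hscale n h2 (-x)]
  rw [tsum_mul_left]
  refine mul_nonneg (by positivity) ?_
  have := discML_nonneg hβ0 hβ1 (mul_pos hx0 (Real.rpow_pos_of_pos hn' _)) h1 (k + 1) n
  simpa only [discML, neg_mul] using this

/-- `1 / Γ(βj + 1)` decays faster than any geometric sequence, so `E_β` is entire. -/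
lemma summable_mittagLeffler {β : ℝ} (hβ0 : 0 < β) (hβ1 : β ≤ 1) {r : ℝ} (hr : 0 < r) :
    Summable fun j : ℕ => (1 / Real.Gamma (β * j + 1)) * r ^ j := by
  have hlim : Tendsto (fun n : ℕ => r * (n : ℝ) ^ (-β)) atTop (𝓝 0) := by
    simpa using ((tendsto_rpow_neg_atTop hβ0).comp tendsto_natCast_atTop_atTop).const_mul r
  obtain ⟨N, hN1, hN0⟩ := ((hlim.eventually_lt_const one_pos).and (eventually_gt_atTop 0)).exists
  have hN' : (0 : ℝ) < N := by exact_mod_cast hN0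
  refine Summable.of_nonneg_of_le (fun j => ?_) (fun j => ?_)
    (summable_discML_aux hβ0 hβ1 (mul_pos hr (Real.rpow_pos_of_pos hN' _)) hN1 0 N)
  · have := Real.Gamma_pos_of_pos (s := β * j + 1) (by positivity)
    positivity
  · have hle : 1 / Real.Gamma (β * j + 1) ≤ negBinom (1 + β * j) N * (N : ℝ) ^ (-(β * j)) := by
      refine le_of_tendsto (tendsto_negBinom (by positivity)) ?_
      filter_upwards [eventually_ge_atTop N] with n hn
      exact negBinom_antitone (by positivity) hN0 hn
    refine (mul_le_mul_of_nonneg_right hle (by positivity)).trans (le_of_eq ?_)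
    rw [show -(β * (j : ℝ)) = (-β) * (j : ℝ) by ring, Real.rpow_mul_natCast hN'.le, mul_pow]
    simp
    ring

/-! ### Entire power series and restriction to the real line -/

lemma summable_derivCoeff {a : ℕ → ℂ} (ha : ∀ r : ℝ, 0 < r → Summable fun j => ‖a j‖ * r ^ j)
    (r : ℝ) (hr : 0 < r) : Summable fun j : ℕ => ‖((j : ℂ) + 1) * a (j + 1)‖ * r ^ j := by
  have h := ((summable_nat_add_iff 1).2 (ha (2 * r) (by positivity))).mul_right (2 * r)⁻¹
  refine Summable.of_nonneg_of_le (fun j => by positivity) (fun j => ?_) h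
  have h1 : ‖(j : ℂ) + 1‖ ≤ 2 ^ j := by
    have : ‖((j + 1 : ℕ) : ℂ)‖ = ((j + 1 : ℕ) : ℝ) := Complex.norm_natCast _
    push_cast at this
    rw [this]
    exact_mod_cast Nat.lt_two_pow_self (n := j)
  rw [norm_mul, pow_succ]
  calc ‖(j : ℂ) + 1‖ * ‖a (j + 1)‖ * r ^ j ≤ 2 ^ j * ‖a (j + 1)‖ * r ^ j := by gcongr
    _ = _ := by
      rw [mul_pow]
      field_simp

lemma hasDerivAt_powerSeries {a : ℕ → ℂ} (ha : ∀ r : ℝ, 0 < r → Summable fun j => ‖a j‖ * r ^ j)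
    (z : ℂ) :
    HasDerivAt (fun z => ∑' j, a j * z ^ j) (∑' j : ℕ, ((j : ℂ) + 1) * a (j + 1) * z ^ j) z := by
  have hR : (0 : ℝ) < ‖z‖ + 1 := by positivity
  have hu : Summable fun j : ℕ => ‖a j * (j : ℂ)‖ * (‖z‖ + 1) ^ (j - 1) := by
    rw [← summable_nat_add_iff 1]
    refine (summable_derivCoeff ha _ hR).congr fun j => ?_
    push_cast
    rw [mul_comm (a (j + 1))]
  have hmain := hasDerivAt_tsum_of_isPreconnected (𝕜 := ℂ) (g := fun (j : ℕ) (z : ℂ) => a j * z ^ j)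
    (g' := fun (j : ℕ) (z : ℂ) => a j * ((j : ℂ) * z ^ (j - 1))) (t := Metric.ball 0 (‖z‖ + 1))
    (y₀ := 0) (y := z) hu Metric.isOpen_ball (convex_ball _ _).isPreconnected
    (fun j y _ => (hasDerivAt_pow j y).const_mul _)
    (fun j y hy => by
      rw [← mul_assoc, norm_mul, norm_pow]
      have : ‖y‖ ≤ ‖z‖ + 1 := by simpa using (Metric.mem_ball.1 hy).le
      gcongr)
    (by simpa using hR)
    (summable_of_ne_finset_zero (s := {0}) fun j hj => by
      have : j ≠ 0 := by simpa using hj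
      simp [this])
    (by simp)
  have hs : Summable fun j : ℕ => a j * ((j : ℂ) * z ^ (j - 1)) := by
    refine Summable.of_norm_bounded hu fun j => ?_
    rw [← mul_assoc, norm_mul, norm_pow]
    have : ‖z‖ ≤ ‖z‖ + 1 := by linarith
    gcongr
  have hshift : ∑' j : ℕ, ((j : ℂ) + 1) * a (j + 1) * z ^ j =
      ∑' j : ℕ, a j * ((j : ℂ) * z ^ (j - 1)) := by
    rw [hs.tsum_eq_zero_add]
    simp only [Nat.cast_zero, zero_mul, mul_zero, zero_add, Nat.cast_add, Nat.cast_one,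
      Nat.add_sub_cancel]
    exact tsum_congr fun j => by ring
  rw [hshift]
  exact hmain

lemma iteratedDeriv_powerSeries (k : ℕ) {a : ℕ → ℂ}
    (ha : ∀ r : ℝ, 0 < r → Summable fun j => ‖a j‖ * r ^ j) :
    iteratedDeriv k (fun z => ∑' j, a j * z ^ j) =
      fun z => ∑' j : ℕ, ((k.factorial * (j + k).choose k : ℕ) : ℂ) * a (j + k) * z ^ j := by
  induction k generalizing a with
  | zero => simp
  | succ k ih =>
    have hd : deriv (fun z => ∑' j, a j * z ^ j) =
        fun z => ∑' j : ℕ, (((j : ℂ) + 1) * a (j + 1)) * z ^ j :=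
      funext fun z => (hasDerivAt_powerSeries ha z).deriv
    rw [iteratedDeriv_succ', hd, ih (a := fun j : ℕ => ((j : ℂ) + 1) * a (j + 1))
      (summable_derivCoeff ha)]
    ext z
    refine tsum_congr fun j => ?_
    have hc : k.factorial * (j + k).choose k * (j + k + 1)
        = (k + 1).factorial * (j + (k + 1)).choose (k + 1) := by
      have := Nat.add_one_mul_choose_eq (j + k) k
      rw [Nat.factorial_succ, ← add_assoc]
      linear_combination k.factorial * this
    rw [← hc, ← add_assoc]
    push_cast
    ring

/-- Iterated derivatives of a holomorphic function that is real on the real points of an open set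
agree there with the real iterated derivatives. -/
lemma iteratedDeriv_ofReal {F : ℂ → ℂ} {f : ℝ → ℝ} {s : Set ℝ} (hs : IsOpen s)
    (hF : ∀ x ∈ s, AnalyticAt ℂ F (x : ℂ)) (hFf : ∀ x ∈ s, F (x : ℂ) = (f x : ℂ)) (n : ℕ) :
    ∀ x ∈ s, iteratedDeriv n F (x : ℂ) = ((iteratedDeriv n f x : ℝ) : ℂ) := by
  induction n with
  | zero => simpa using hFf
  | succ n ih =>
    intro x hx
    have hd : HasDerivAt (iteratedDeriv n F) (iteratedDeriv (n + 1) F x) (x : ℂ) := by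
      rw [iteratedDeriv_succ]
      refine DifferentiableAt.hasDerivAt (AnalyticAt.differentiableAt ?_)
      rw [iteratedDeriv_eq_iterate]
      exact (hF x hx).iterated_deriv n
    have h1 : HasDerivAt (fun t : ℝ => ((iteratedDeriv n f t : ℝ) : ℂ))
        (iteratedDeriv (n + 1) F x) x := by
      refine hd.comp_ofReal.congr_of_eventuallyEq ?_
      filter_upwards [hs.mem_nhds hx] with t ht using (ih t ht).symm
    have h2 : HasDerivAt (iteratedDeriv n f) (iteratedDeriv (n + 1) F x).re x := by
      simpa using hd.real_of_complex.congr_of_eventuallyEq (by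
        filter_upwards [hs.mem_nhds hx] with t ht
        rw [ih t ht, Complex.ofReal_re])
    rw [iteratedDeriv_succ (f := f), h2.deriv]
    exact h1.unique h2.ofReal_comp

/-! ### The Mittag-Leffler function -/

lemma mittagLeffler_eq (β : ℝ) : mittagLeffler β =
    fun z => ∑' j : ℕ, ((1 / Real.Gamma (β * j + 1) : ℝ) : ℂ) * z ^ j := by
  ext z
  refine tsum_congr fun j => ?_
  rw [Complex.Gamma_ofReal]
  push_cast
  ring

lemma mittagLeffler_coeff_summable {β : ℝ} (hβ0 : 0 < β) (hβ1 : β ≤ 1) (r : ℝ) (hr : 0 < r) :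
    Summable fun j : ℕ => ‖((1 / Real.Gamma (β * j + 1) : ℝ) : ℂ)‖ * r ^ j := by
  refine (summable_mittagLeffler hβ0 hβ1 hr).congr fun j => ?_
  have := Real.Gamma_pos_of_pos (s := β * j + 1) (by positivity)
  rw [Complex.norm_real, Real.norm_of_nonneg (by positivity)]

lemma differentiable_mittagLeffler {β : ℝ} (hβ0 : 0 < β) (hβ1 : β ≤ 1) :
    Differentiable ℂ (mittagLeffler β) := by
  rw [mittagLeffler_eq]
  exact fun z =>
    (hasDerivAt_powerSeries (mittagLeffler_coeff_summable hβ0 hβ1) z).differentiableAt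

lemma mittagLeffler_ofReal (β x : ℝ) : mittagLeffler β x = (mittagLefflerR β x : ℂ) := by
  rw [mittagLeffler, mittagLefflerR, Complex.ofReal_tsum]
  refine tsum_congr fun j => ?_
  rw [Complex.Gamma_ofReal]
  push_cast
  rfl

lemma mittagLeffler_zero (β : ℝ) : mittagLeffler β 0 = 1 := by
  rw [mittagLeffler, tsum_eq_single 0 fun j hj => by simp [hj]]
  simp

lemma iteratedDeriv_mittagLeffler_ofReal {β : ℝ} (hβ0 : 0 < β) (hβ1 : β ≤ 1) (k : ℕ) (x : ℝ) :
    iteratedDeriv k (mittagLeffler β) x = ((iteratedDeriv k (mittagLefflerR β) x : ℝ) : ℂ) :=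
  iteratedDeriv_ofReal isOpen_univ
    (fun x _ => (differentiable_mittagLeffler hβ0 hβ1).analyticAt x)
    (fun x _ => mittagLeffler_ofReal β x) k x (Set.mem_univ x)

/-- Complete monotonicity of `x ↦ E_β(-x)` (Pollard). -/
lemma iteratedDeriv_mittagLefflerR_nonneg {β : ℝ} (hβ0 : 0 < β) (hβ1 : β ≤ 1) {x : ℝ} (hx : 0 < x)
    (k : ℕ) : 0 ≤ iteratedDeriv k (mittagLefflerR β) (-x) := by
  have h := iteratedDeriv_mittagLeffler_ofReal hβ0 hβ1 k (-x)
  rw [mittagLeffler_eq, iteratedDeriv_powerSeries k (mittagLeffler_coeff_summable hβ0 hβ1)] at h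
  have h2 : iteratedDeriv k (mittagLefflerR β) (-x) = k.factorial *
      ∑' j : ℕ, ((j + k).choose k : ℝ) * (-x) ^ j * (1 / Real.Gamma (β * (j + k : ℕ) + 1)) := by
    apply Complex.ofReal_injective
    rw [← h, ← tsum_mul_left, Complex.ofReal_tsum]
    refine tsum_congr fun j => ?_
    push_cast
    ring
  rw [h2]
  exact mul_nonneg (by positivity) (tsum_mittagLeffler_nonneg hβ0 hβ1 hx k)

/-! ### Factorial moments of the fractional Poisson measure -/

lemma descPochhammer_eval_natCast (m j : ℕ) :
    (descPochhammer ℂ m).eval (j : ℂ) = (j.descFactorial m : ℂ) :=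
  descPochhammer_eval_eq_descFactorial ℂ j m

/-- Taylor expansion of `E_β⁽ᵐ⁾` about `-λ`, evaluated at `0`. -/
lemma hasSum_factorialMoment {lam β : ℝ} (hβ0 : 0 < β) (hβ1 : β ≤ 1) (m : ℕ) :
    HasSum (fun j : ℕ => ((lam ^ j / j.factorial * iteratedDeriv j (mittagLefflerR β) (-lam) : ℝ) : ℂ)
      * (j.descFactorial m : ℂ)) ((lam : ℂ) ^ m * iteratedDeriv m (mittagLeffler β) 0) := by
  have hE := differentiable_mittagLeffler hβ0 hβ1
  have hEm : Differentiable ℂ (iteratedDeriv m (mittagLeffler β)) :=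
    (hE.contDiff (n := ⊤)).differentiable_iteratedDeriv m (by exact_mod_cast WithTop.coe_lt_top _)
  have h := (Complex.hasSum_taylorSeries_of_entire hEm (-lam : ℂ) 0).mul_left ((lam : ℂ) ^ m)
  rw [← hasSum_nat_add_iff' m, sum_eq_zero, sub_zero]
  · refine h.congr_fun fun j => ?_
    have hdf : ((j + m).descFactorial m : ℂ) * j.factorial = (j + m).factorial := by
      have := Nat.factorial_mul_descFactorial (Nat.le_add_left m j)
      rw [Nat.add_sub_cancel] at this
      rw [mul_comm]
      exact_mod_cast this
    have hit : iteratedDeriv j (iteratedDeriv m (mittagLeffler β)) (-lam : ℂ)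
        = ((iteratedDeriv (j + m) (mittagLefflerR β) (-lam) : ℝ) : ℂ) := by
      rw [← iteratedDeriv_mittagLeffler_ofReal hβ0 hβ1, iteratedDeriv_eq_iterate,
        iteratedDeriv_eq_iterate, iteratedDeriv_eq_iterate, ← Function.iterate_add_apply]
      push_cast
      rfl
    have hj : (j.factorial : ℂ) ≠ 0 := by exact_mod_cast j.factorial_ne_zero
    have hjm : ((j + m).factorial : ℂ) ≠ 0 := by exact_mod_cast (j + m).factorial_ne_zero
    rw [hit, smul_eq_mul, smul_eq_mul]
    push_cast
    rw [← hdf] at hjm ⊢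
    have hd0 := left_ne_zero_of_mul hjm
    field_simp
    ring
  · intro j hj
    rw [Nat.descFactorial_of_lt (mem_range.1 hj)]
    simp

lemma factorialMoment {lam β : ℝ} (hlam : 0 < lam) (hβ0 : 0 < β) (hβ1 : β ≤ 1) (m : ℕ) :
    Integrable (fun x : ℝ => (descPochhammer ℂ m).eval (x : ℂ)) (fracPoisson lam β) ∧
    ∫ x : ℝ, (descPochhammer ℂ m).eval (x : ℂ) ∂(fracPoisson lam β) =
      iteratedDeriv m (fun z : ℂ => mittagLeffler β (lam * z)) 0 := by
  have hw : ∀ j : ℕ, 0 ≤ lam ^ j / j.factorial * iteratedDeriv j (mittagLefflerR β) (-lam) :=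
    fun j => mul_nonneg (by positivity) (iteratedDeriv_mittagLefflerR_nonneg hβ0 hβ1 hlam j)
  have hsum := hasSum_factorialMoment (lam := lam) hβ0 hβ1 m
  have habs : Summable fun j : ℕ =>
      (ENNReal.ofReal (lam ^ j / j.factorial * iteratedDeriv j (mittagLefflerR β) (-lam))).toReal *
        ‖(descPochhammer ℂ m).eval (((j : ℝ) : ℝ) : ℂ)‖ := by
    refine hsum.summable.norm.congr fun j => ?_
    rw [ENNReal.toReal_ofReal (hw j), norm_mul, Complex.norm_real, Real.norm_of_nonneg (hw j),
      Complex.ofReal_natCast, descPochhammer_eval_natCast]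
  refine ⟨integrable_sum_dirac (fun _ => ENNReal.ofReal_ne_top) habs, ?_⟩
  have h := hasSum_integral_sum_dirac (f := fun x : ℝ => (descPochhammer ℂ m).eval (x : ℂ))
    (x := fun j : ℕ => (j : ℝ)) (fun _ => ENNReal.ofReal_ne_top) habs
  have hcomp := iteratedDeriv_comp_const_mul (n := m)
    (differentiable_mittagLeffler hβ0 hβ1).contDiff (lam : ℂ)
  simp only [hcomp, mul_zero]
  refine h.unique (hsum.congr_fun fun j => ?_)
  rw [ENNReal.toReal_ofReal (hw j), Complex.ofReal_natCast, descPochhammer_eval_natCast,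
    Complex.real_smul]

/-! ### The functions `z ↦ e^{x log(1+z)}` -/

lemma hasDerivAt_log_one_add {z : ℂ} (hz : 1 + z ∈ Complex.slitPlane) :
    HasDerivAt (fun z : ℂ => Complex.log (1 + z)) (Complex.exp (-Complex.log (1 + z))) z := by
  rw [Complex.exp_neg, Complex.exp_log (Complex.slitPlane_ne_zero hz)]
  have h := (Complex.hasDerivAt_log hz).comp z ((hasDerivAt_id z).const_add 1)
  rw [mul_one] at h
  exact h

lemma hasDerivAt_exp_log (c : ℂ) {z : ℂ} (hz : 1 + z ∈ Complex.slitPlane) :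
    HasDerivAt (fun z : ℂ => Complex.exp (c * Complex.log (1 + z)))
      (c * Complex.exp ((c - 1) * Complex.log (1 + z))) z := by
  refine ((hasDerivAt_log_one_add hz).const_mul c).cexp.congr_deriv ?_
  rw [show (c - 1) * Complex.log (1 + z) = c * Complex.log (1 + z) + -Complex.log (1 + z) by ring,
    Complex.exp_add]
  ring

lemma isOpen_one_add_slitPlane : IsOpen {z : ℂ | 1 + z ∈ Complex.slitPlane} :=
  Complex.isOpen_slitPlane.preimage (by fun_prop)

lemma analyticAt_log_one_add {z : ℂ} (hz : 1 + z ∈ Complex.slitPlane) :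
    AnalyticAt ℂ (fun z : ℂ => Complex.log (1 + z)) z :=
  (analyticAt_const.add analyticAt_id).clog hz

lemma iteratedDeriv_exp_log (x : ℂ) (i : ℕ) : ∀ z : ℂ, 1 + z ∈ Complex.slitPlane →
    iteratedDeriv i (fun z : ℂ => Complex.exp (x * Complex.log (1 + z))) z =
      (descPochhammer ℂ i).eval x * Complex.exp ((x - i) * Complex.log (1 + z)) := by
  induction i with
  | zero => simp
  | succ i ih =>
    intro z hz
    rw [iteratedDeriv_succ]
    have h := ((hasDerivAt_exp_log (x - i) hz).const_mul
      ((descPochhammer ℂ i).eval x)).congr_of_eventuallyEq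
      (by filter_upwards [isOpen_one_add_slitPlane.mem_nhds hz] with w hw using ih w hw)
    rw [h.deriv, descPochhammer_succ_right]
    simp only [Polynomial.eval_mul, Polynomial.eval_sub, Polynomial.eval_X,
      Polynomial.eval_natCast]
    push_cast
    rw [sub_sub]
    ring

lemma iteratedDeriv_exp_log_mul_log (x : ℂ) (i : ℕ) : ∀ z : ℂ, 1 + z ∈ Complex.slitPlane →
    iteratedDeriv i
      (fun z : ℂ => Complex.exp (x * Complex.log (1 + z)) * Complex.log (1 + z)) z =
      (descPochhammer ℂ i).derivative.eval x * Complex.exp ((x - i) * Complex.log (1 + z)) +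
      (descPochhammer ℂ i).eval x *
        (Complex.exp ((x - i) * Complex.log (1 + z)) * Complex.log (1 + z)) := by
  induction i with
  | zero => simp
  | succ i ih =>
    intro z hz
    rw [iteratedDeriv_succ]
    have h1 := hasDerivAt_exp_log (x - i) hz
    have h := ((h1.const_mul ((descPochhammer ℂ i).derivative.eval x)).add
      ((h1.mul (hasDerivAt_log_one_add hz)).const_mul
        ((descPochhammer ℂ i).eval x))).congr_of_eventuallyEq
      (by filter_upwards [isOpen_one_add_slitPlane.mem_nhds hz] with w hw using ih w hw)
    have he : Complex.exp ((x - i) * Complex.log (1 + z)) *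
        Complex.exp (-Complex.log (1 + z)) = Complex.exp ((x - i - 1) * Complex.log (1 + z)) := by
      rw [← Complex.exp_add]
      congr 1
      ring
    rw [h.deriv, descPochhammer_succ_right, he]
    simp only [Polynomial.derivative_mul, Polynomial.derivative_sub, Polynomial.derivative_X,
      Polynomial.derivative_natCast, Polynomial.eval_add, Polynomial.eval_mul, Polynomial.eval_sub,
      Polynomial.eval_X, Polynomial.eval_natCast, sub_zero, Polynomial.eval_one]
    push_cast
    rw [sub_sub]
    ring

lemma one_add_zero_mem : (1 : ℂ) + 0 ∈ Complex.slitPlane := by simp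

lemma contDiffAt_exp_log (x : ℂ) (n : ℕ) :
    ContDiffAt ℂ n (fun z : ℂ => Complex.exp (x * Complex.log (1 + z))) 0 :=
  (analyticAt_const.mul (analyticAt_log_one_add one_add_zero_mem)).cexp.contDiffAt

lemma iteratedDeriv_exp_log_mul {h : ℂ → ℂ} (hh : AnalyticAt ℂ h 0) (n : ℕ) (x : ℂ) :
    iteratedDeriv n (fun z : ℂ => Complex.exp (x * Complex.log (1 + z)) * h z) 0 =
      ∑ i ∈ range (n + 1), (n.choose i : ℂ) * (descPochhammer ℂ i).eval x *
        iteratedDeriv (n - i) h 0 := by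
  rw [iteratedDeriv_fun_mul (contDiffAt_exp_log x n) hh.contDiffAt]
  refine sum_congr rfl fun i _ => ?_
  rw [iteratedDeriv_exp_log x i 0 one_add_zero_mem]
  simp

/-- Differentiating `n`-th Taylor coefficients in the parameter `x` multiplies the generating
function by `log(1+z)`. -/
lemma iteratedDeriv_param {h : ℂ → ℂ} (hh : AnalyticAt ℂ h 0) (n k : ℕ) :
    iteratedDeriv k (fun t : ℝ =>
      iteratedDeriv n (fun z : ℂ => Complex.exp (t * Complex.log (1 + z)) * h z) 0) =
    fun t : ℝ => iteratedDeriv n (fun z : ℂ => Complex.exp (t * Complex.log (1 + z)) *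
      (Complex.log (1 + z) ^ k * h z)) 0 := by
  induction k generalizing h with
  | zero => simp
  | succ k ih =>
    have hl := analyticAt_log_one_add one_add_zero_mem
    have hd : deriv (fun t : ℝ =>
        iteratedDeriv n (fun z : ℂ => Complex.exp (t * Complex.log (1 + z)) * h z) 0) =
        fun t : ℝ => iteratedDeriv n (fun z : ℂ => Complex.exp (t * Complex.log (1 + z)) *
          (Complex.log (1 + z) * h z)) 0 := by
      ext t
      have h1 : iteratedDeriv n (fun z : ℂ => Complex.exp (t * Complex.log (1 + z)) *
          (Complex.log (1 + z) * h z)) 0 = ∑ i ∈ range (n + 1), (n.choose i : ℂ) *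
            (descPochhammer ℂ i).derivative.eval (t : ℂ) * iteratedDeriv (n - i) h 0 := by
        simp_rw [← mul_assoc]
        rw [iteratedDeriv_fun_mul ((contDiffAt_exp_log t n).mul hl.contDiffAt) hh.contDiffAt]
        refine sum_congr rfl fun i _ => ?_
        rw [iteratedDeriv_exp_log_mul_log t i 0 one_add_zero_mem]
        simp
      rw [h1]
      simp_rw [iteratedDeriv_exp_log_mul hh]
      apply HasDerivAt.deriv
      refine HasDerivAt.fun_sum fun i _ => ?_
      exact ((((descPochhammer ℂ i).hasDerivAt (t : ℂ)).comp_ofReal).const_mul _).mul_const _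
    rw [iteratedDeriv_succ', hd, ih (h := fun z => Complex.log (1 + z) * h z) (hl.mul hh)]
    ext t
    congr 1
    ext z
    ring

lemma iteratedDeriv_log_pow_eq_zero (k : ℕ) : ∀ n < k,
    iteratedDeriv n (fun z : ℂ => Complex.log (1 + z) ^ k) 0 = 0 := by
  induction k with
  | zero => intro n hn; omega
  | succ k ih =>
    intro n hn
    have hl := analyticAt_log_one_add one_add_zero_mem
    simp_rw [pow_succ']
    have hlk : AnalyticAt ℂ (fun z : ℂ => Complex.log (1 + z) ^ k) 0 := hl.pow k
    rw [iteratedDeriv_fun_mul hl.contDiffAt hlk.contDiffAt]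
    refine sum_eq_zero fun i hi => ?_
    rcases Nat.eq_zero_or_pos i with rfl | hi0
    · simp
    · rw [show iteratedDeriv (n - i) (fun z : ℂ => Complex.log (1 + z) ^ k) 0 = 0 from
        ih (n - i) (by have := mem_range.1 hi; omega), mul_zero]

lemma iteratedDeriv_log_pow (n k : ℕ) :
    iteratedDeriv n (fun z : ℂ => Complex.log (1 + z) ^ k) 0 =
      (k.factorial : ℂ) * ((stirlingFst n k : ℝ) : ℂ) := by
  have h := iteratedDeriv_ofReal (F := fun z : ℂ => Complex.log (1 + z) ^ k)
    (f := fun x : ℝ => Real.log (1 + x) ^ k) (s := Set.Ioi (-1)) isOpen_Ioi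
    (fun x hx => (analyticAt_log_one_add (by
      left
      have : -1 < x := hx
      simp
      linarith)).pow k)
    (fun x hx => by
      have : -1 < x := hx
      push_cast
      rw [Complex.ofReal_log (by linarith)]
      push_cast
      rfl) n 0 (by simp)
  rw [Complex.ofReal_zero] at h
  rw [h, stirlingFst]
  have : (k.factorial : ℂ) ≠ 0 := by exact_mod_cast k.factorial_ne_zero
  push_cast
  field_simp

theorem stmt10 (lam β : ℝ) (hlam : 0 < lam) (hβ0 : 0 < β) (hβ1 : β ≤ 1) (n k : ℕ) :
    (∫ x : ℝ, iteratedDeriv k (fun t : ℝ => genAppell lam β n t) x ∂(fracPoisson lam β)) =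
      if k ≤ n then (k.factorial : ℂ) * ((stirlingFst n k : ℝ) : ℂ) else 0 := by
  have hE : AnalyticAt ℂ (fun z : ℂ => mittagLeffler β (lam * z)) 0 :=
    ((differentiable_mittagLeffler hβ0 hβ1).comp (differentiable_id.const_mul _)).analyticAt 0
  have hE0 : mittagLeffler β (lam * 0) ≠ 0 := by simp [mittagLeffler_zero]
  have hg : AnalyticAt ℂ (fun z : ℂ => (mittagLeffler β (lam * z))⁻¹) 0 := hE.inv hE0
  have hl := analyticAt_log_one_add one_add_zero_mem
  have hh : AnalyticAt ℂ (fun z : ℂ => Complex.log (1 + z) ^ k * (mittagLeffler β (lam * z))⁻¹) 0 :=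
    (hl.pow k).mul hg
  have hC : iteratedDeriv k (fun t : ℝ => genAppell lam β n t) = fun t : ℝ =>
      ∑ i ∈ range (n + 1), (n.choose i : ℂ) * (descPochhammer ℂ i).eval (t : ℂ) *
        iteratedDeriv (n - i)
          (fun z : ℂ => Complex.log (1 + z) ^ k * (mittagLeffler β (lam * z))⁻¹) 0 := by
    simp only [genAppell, div_eq_mul_inv]
    rw [iteratedDeriv_param hg n k]
    ext t
    exact iteratedDeriv_exp_log_mul hh n t
  have hint : (∫ x : ℝ, iteratedDeriv k (fun t : ℝ => genAppell lam β n t) x ∂(fracPoisson lam β))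
      = iteratedDeriv n (fun z : ℂ => Complex.log (1 + z) ^ k) 0 := by
    have hprod : (fun z : ℂ => Complex.log (1 + z) ^ k) =ᶠ[𝓝 0] fun z : ℂ =>
        mittagLeffler β (lam * z) *
          (Complex.log (1 + z) ^ k * (mittagLeffler β (lam * z))⁻¹) := by
      filter_upwards [hE.continuousAt.eventually_ne hE0] with z hz
      rw [mul_left_comm, mul_inv_cancel₀ hz, mul_one]
    rw [hprod.iteratedDeriv_eq n, iteratedDeriv_fun_mul hE.contDiffAt hh.contDiffAt, hC,
      integral_finsetSum]
    · refine sum_congr rfl fun i _ => ?_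
      rw [integral_mul_const, integral_const_mul, (factorialMoment hlam hβ0 hβ1 i).2]
    · intro i _
      exact ((factorialMoment hlam hβ0 hβ1 i).1.const_mul _).mul_const _
  rw [hint]
  split_ifs with hkn
  · exact iteratedDeriv_log_pow n k
  · exact iteratedDeriv_log_pow_eq_zero k n (not_le.1 hkn)
end
end

section
/- Let λ > 0 and β ∈ (0,1]. The generalized Appell system is biorthogonal with respect to L²(π_{λ,β}): for all n, m ∈ ℕ₀, ∫_ℝ (Δ^m C_n^{λ,β})(x) dπ_{λ,β}(x) = n! δ_{n,m}, where Δ is the forward difference operator (Δf)(x) = f(x+1) − f(x), Δ^m its m-fold iterate, and δ_{n,m} the Kronecker delta. (The left-hand side is the dual pairing ⟨⟨C_n^{λ,β}, Q_m^{π_{λ,β}}⟩⟩ of the generalized Appell polynomial C_n^{λ,β} with the m-th element Q_m^{π_{λ,β}} = ((e^∇ − 1)^m)^* 1 of the generalized dual Appell system.) -/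
/-!
The `m`-fold forward difference multiplies the generating function `e^{x log(1+z)} / E_β(λz)` of the
Appell system by `z ^ m`, so at `x = k` the integrand is the `n`-th derivative at `0` of
`(1+z)^k h(z)` with `h(z) = z ^ m / E_β(λz)`. By the Leibniz rule it is a finite combination of the
falling factorials of `k`, and the `j`-th factorial moment of the fractional Poisson measure is the
`j`-th derivative of `E_β(λz)` at `0` (`hasSum_factorialMoment`). The Leibniz rule applied to
`E_β(λz) h(z) = z ^ m` then identifies the integral with the `n`-th derivative of `z ^ m` at `0`.

The analytic core is that the weights `(λᵏ/k!) E_β⁽ᵏ⁾(-λ)` are nonnegative, i.e. that `E_β(-x)` is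
completely monotone (`iteratedDeriv_mlR_nonneg`); otherwise the measure, whose weights pass through
`ENNReal.ofReal`, would not carry them. The functional `tⁿ ↦ n!/Γ(βn+1)` is shown to be nonnegative
on every polynomial that is nonnegative on `[0, ∞)` (`ml_functional_nonneg`): by Euler's limit it is
a limit of the functionals `tⁿ ↦ N^{-βn} n! ∏_{i ≤ N} (βn+i) / N!`, and for `β ≤ 1` the numbers
`n! ∏_{i ≤ N} (βn+i)` are nonnegative combinations, with coefficients not depending on `n`, of the
moments `(n+k)!` of `tᵏ e^{-t} dt`. Applied to `tᵏ` times the even Taylor sections of `e^{-λt}`,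
which are positive on `[0, ∞)`, this shows that the even Taylor sections of `E_β⁽ᵏ⁾` are nonnegative
at `-λ`, and hence so is their limit.
-/

open MeasureTheory Finset
open scoped ENNReal NNReal

noncomputable section

/-! ### Growth of the Gamma function -/

/-- Restrict Euler's integral to `(R, ∞)`, where `t ^ s ≥ R ^ s`. -/
lemma Gamma_lower (R s : ℝ) (hR : 0 < R) (hs : 0 ≤ s) :
    R ^ s * Real.exp (-R) ≤ Real.Gamma (s + 1) := by
  rw [Real.Gamma_eq_integral (by linarith)]
  have hint := Real.GammaIntegral_convergent (s := s + 1) (by linarith)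
  calc R ^ s * Real.exp (-R) = ∫ x in Set.Ioi R, R ^ s * Real.exp (-x) := by
        rw [integral_const_mul, integral_exp_neg_Ioi]
    _ ≤ ∫ x in Set.Ioi R, Real.exp (-x) * x ^ (s + 1 - 1) := by
        refine setIntegral_mono_on ?_ ?_ measurableSet_Ioi ?_
        · exact (integrableOn_exp_neg_Ioi R).const_mul _
        · exact hint.mono_set (Set.Ioi_subset_Ioi hR.le)
        · intro x hx
          have hx' : R < x := hx
          rw [mul_comm, add_sub_cancel_right]
          gcongr
    _ ≤ _ := by
        refine setIntegral_mono_set hint ?_ (Set.Ioi_subset_Ioi hR.le).eventuallyLE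
        filter_upwards [ae_restrict_mem measurableSet_Ioi] with x hx
        have hx' : (0 : ℝ) < x := hx
        positivity

lemma summable_ml (β : ℝ) (hβ : 0 < β) (r : ℝ) (hr : 0 ≤ r) :
    Summable fun n : ℕ => r ^ n / Real.Gamma (β * n + 1) := by
  -- With `R ^ β = 2(r + 1)` the lower bound on `Γ(βn + 1)` gives a geometric majorant of ratio `1/2`.
  set R : ℝ := (2 * (r + 1)) ^ (1 / β) with hR
  have hR0 : 0 < R := by positivity
  have hRb : R ^ β = 2 * (r + 1) := by
    rw [hR, ← Real.rpow_mul (by positivity), one_div_mul_cancel hβ.ne', Real.rpow_one]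
  refine Summable.of_nonneg_of_le (f := fun n : ℕ => Real.exp R * (1 / 2) ^ n) ?_ ?_ ?_
  · intro n
    have : 0 < Real.Gamma (β * n + 1) := Real.Gamma_pos_of_pos (by positivity)
    positivity
  · intro n
    have h1 := Gamma_lower R (β * n) hR0 (by positivity)
    rw [Real.rpow_mul hR0.le, hRb, Real.rpow_natCast] at h1
    have h2 : 0 < Real.exp (-R) := Real.exp_pos _
    rw [div_le_iff₀ (lt_of_lt_of_le (by positivity) h1)]
    calc r ^ n ≤ (r + 1) ^ n := by gcongr; linarith
      _ = Real.exp R * (1 / 2) ^ n * ((2 * (r + 1)) ^ n * Real.exp (-R)) := by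
        rw [mul_pow, Real.exp_neg, one_div, inv_pow]
        field_simp
      _ ≤ _ := by gcongr
  · exact (summable_geometric_of_lt_one (by norm_num) (by norm_num)).mul_left _

/-! ### Positivity of the Mittag-Leffler moment functional -/

/-- The Taylor sections of `e^{-x}` alternately over- and underestimate it on `[0, ∞)`. The
derivative of the `(n+1)`-st signed remainder is the `n`-th one. -/
lemma exp_taylor_sign (n : ℕ) : ∀ x : ℝ, 0 ≤ x →
    0 ≤ (-1) ^ n * (Real.exp (-x) - ∑ j ∈ range n, (-x) ^ j / j.factorial) := by
  induction n with
  | zero => intro x _; simp; positivity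
  | succ n ih =>
    have hd : ∀ x : ℝ, HasDerivAt (fun x : ℝ => (-1) ^ (n + 1) *
        (Real.exp (-x) - ∑ j ∈ range (n + 1), (-x) ^ j / j.factorial))
        ((-1) ^ n * (Real.exp (-x) - ∑ j ∈ range n, (-x) ^ j / j.factorial)) x := by
      intro x
      have h1 : HasDerivAt (fun x : ℝ => ∑ j ∈ range (n + 1), (-x) ^ j / (j.factorial : ℝ))
          (∑ j ∈ range (n + 1), ((j : ℝ) * (-x) ^ (j - 1) * (-1)) / (j.factorial : ℝ)) x :=
        HasDerivAt.fun_sum fun j _ => ((hasDerivAt_neg x).fun_pow j).div_const _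
      have h2 := ((hasDerivAt_neg x).exp.sub h1).const_mul ((-1 : ℝ) ^ (n + 1))
      convert! h2 using 1
      rw [sum_range_succ']
      have : ∀ j : ℕ, ((j + 1 : ℕ) : ℝ) * (-x) ^ (j + 1 - 1) * (-1) / ((j + 1).factorial : ℝ)
          = - ((-x) ^ j / (j.factorial : ℝ)) := by
        intro j
        rw [Nat.factorial_succ]
        push_cast
        have : (j.factorial : ℝ) ≠ 0 := by positivity
        have : (j : ℝ) + 1 ≠ 0 := by positivity
        simp
        field_simp
      simp only [this, sum_neg_distrib]
      simp
      ring
    intro x hx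
    have hm : MonotoneOn (fun x : ℝ => (-1) ^ (n + 1) *
        (Real.exp (-x) - ∑ j ∈ range (n + 1), (-x) ^ j / j.factorial)) (Set.Ici 0) := by
      refine monotoneOn_of_deriv_nonneg (convex_Ici 0)
        (fun x _ => (hd x).continuousAt.continuousWithinAt)
        (fun x _ => (hd x).differentiableAt.differentiableWithinAt) ?_
      intro x hx
      rw [(hd x).deriv]
      rw [interior_Ici] at hx
      exact ih x (le_of_lt hx)
    have := hm (Set.self_mem_Ici) hx hx
    simpa [sum_range_succ'] using this

lemma exp_taylor_nonneg (M : ℕ) (x : ℝ) (hx : 0 ≤ x) :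
    0 ≤ ∑ j ∈ range (2 * M + 1), (-x) ^ j / (j.factorial : ℝ) := by
  have h := exp_taylor_sign (2 * M + 1) x hx
  have h1 : (-1 : ℝ) ^ (2 * M + 1) = -1 := by rw [pow_succ, pow_mul]; simp
  rw [h1] at h
  have := Real.exp_pos (-x)
  linarith

/-- `(n + k)!` is the `n`-th moment of `tᵏ e^{-t} dt` on `(0, ∞)`, so the functional
`tⁿ ↦ rⁿ (n + k)!` is nonnegative on polynomials `∑ b_j t^{e_j}` that are nonnegative on `[0, ∞)`. -/
lemma gamma_moment_nonneg {ι : Type*} (S : Finset ι) (b : ι → ℝ) (e : ι → ℕ)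
    (hP : ∀ t : ℝ, 0 ≤ t → 0 ≤ ∑ j ∈ S, b j * t ^ e j) (r : ℝ) (hr : 0 ≤ r) (k : ℕ) :
    0 ≤ ∑ j ∈ S, b j * r ^ e j * ((e j + k).factorial : ℝ) := by
  have hint : ∀ n : ℕ, IntegrableOn (fun x : ℝ => Real.exp (-x) * x ^ n) (Set.Ioi 0) := by
    intro n
    have := Real.GammaIntegral_convergent (s := n + 1) (by positivity)
    simpa using this
  have hval : ∀ n : ℕ, (n.factorial : ℝ) = ∫ x in Set.Ioi (0 : ℝ), Real.exp (-x) * x ^ n := by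
    intro n
    rw [← Real.Gamma_nat_eq_factorial, Real.Gamma_eq_integral (by positivity)]
    simp
  have : ∑ j ∈ S, b j * r ^ e j * ((e j + k).factorial : ℝ) =
      ∫ x in Set.Ioi (0 : ℝ), ∑ j ∈ S, b j * r ^ e j * (Real.exp (-x) * x ^ (e j + k)) := by
    rw [integral_finsetSum _ fun j _ => (hint _).const_mul _]
    simp only [integral_const_mul, hval]
  rw [this]
  refine setIntegral_nonneg measurableSet_Ioi fun x hx => ?_
  have hx' : (0 : ℝ) < x := hx
  have : ∑ j ∈ S, b j * r ^ e j * (Real.exp (-x) * x ^ (e j + k)) =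
      (Real.exp (-x) * x ^ k) * ∑ j ∈ S, b j * (r * x) ^ e j := by
    rw [mul_sum]
    refine sum_congr rfl fun j _ => ?_
    rw [pow_add, mul_pow]; ring
  rw [this]
  exact mul_nonneg (by positivity) (hP _ (by positivity))

/-- The functional `tⁿ ↦ rⁿ (n+k)! ∏_{i<N} (βn+s+i+1)` is nonnegative on polynomials that are
nonnegative on `[0, ∞)`, provided `k ≤ s` and `β ≤ 1`. By the identity
`(n+k)! (βn+s+1) = β (n+k+1)! + (s+1-β(k+1)) (n+k)!`, both of whose coefficients are nonnegative,
the factors can be absorbed one at a time, until `gamma_moment_nonneg` applies. -/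
lemma rising_nonneg {ι : Type*} (S : Finset ι) (b : ι → ℝ) (e : ι → ℕ)
    (hP : ∀ t : ℝ, 0 ≤ t → 0 ≤ ∑ j ∈ S, b j * t ^ e j) (r : ℝ) (hr : 0 ≤ r)
    (β : ℝ) (hβ0 : 0 ≤ β) (hβ1 : β ≤ 1) (N : ℕ) : ∀ k s : ℕ, k ≤ s →
    0 ≤ ∑ j ∈ S, b j * r ^ e j * ((e j + k).factorial : ℝ) *
      ∏ i ∈ range N, (β * e j + s + i + 1) := by
  induction N with
  | zero => intro k s _; simpa using gamma_moment_nonneg S b e hP r hr k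
  | succ N ih =>
    intro k s hks
    have key : ∑ j ∈ S, b j * r ^ e j * ((e j + k).factorial : ℝ) *
          ∏ i ∈ range (N + 1), (β * e j + s + i + 1) =
        β * (∑ j ∈ S, b j * r ^ e j * ((e j + (k + 1)).factorial : ℝ) *
          ∏ i ∈ range N, (β * e j + (s + 1 : ℕ) + i + 1)) +
        (s + 1 - β * (k + 1)) * (∑ j ∈ S, b j * r ^ e j * ((e j + k).factorial : ℝ) *
          ∏ i ∈ range N, (β * e j + (s + 1 : ℕ) + i + 1)) := by
      rw [mul_sum, mul_sum, ← sum_add_distrib]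
      refine sum_congr rfl fun j _ => ?_
      rw [prod_range_succ']
      have h1 : ∀ i : ℕ, β * e j + s + ((i + 1 : ℕ) : ℝ) + 1 =
          β * e j + ((s + 1 : ℕ) : ℝ) + i + 1 := by intro i; push_cast; ring
      simp only [h1]
      rw [← add_assoc, Nat.factorial_succ]
      push_cast
      ring
    rw [key]
    have hks' : (k : ℝ) ≤ s := by exact_mod_cast hks
    have hc : 0 ≤ (s + 1 - β * (k + 1) : ℝ) := by nlinarith
    have := ih (k + 1) (s + 1) (by omega)
    have := ih k (s + 1) (by omega)
    positivity

/-- Euler's limit formula for `1 / Γ(s + 1)`. -/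
lemma tendsto_rising (s : ℝ) (hs : 0 ≤ s) :
    Filter.Tendsto (fun N : ℕ => (∏ i ∈ range N, (s + i + 1)) / (N.factorial * (N : ℝ) ^ s))
      Filter.atTop (nhds (1 / Real.Gamma (s + 1))) := by
  have hG : 0 < Real.Gamma (s + 1) := Real.Gamma_pos_of_pos (by linarith)
  have h1 := (Real.GammaSeq_tendsto_Gamma (s + 1)).inv₀ hG.ne'
  have h2 : Filter.Tendsto (fun N : ℕ => (N : ℝ) / (N + (s + 1))) Filter.atTop (nhds 1) :=
    tendsto_natCast_div_add_atTop (s + 1)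
  have h3 := h1.mul h2
  rw [mul_one, ← one_div] at h3
  refine h3.congr' ?_
  filter_upwards [Filter.eventually_gt_atTop 0] with N hN
  have hN' : (0 : ℝ) < N := by exact_mod_cast hN
  rw [Real.GammaSeq, prod_range_succ, Real.rpow_add hN', Real.rpow_one]
  have h4 : ∏ j ∈ range N, (s + 1 + (j : ℝ)) = ∏ i ∈ range N, (s + i + 1) :=
    prod_congr rfl fun j _ => by ring
  rw [h4]
  have h5 : (0 : ℝ) < (N : ℝ) ^ s := by positivity
  have h6 : (0 : ℝ) < N.factorial := by positivity
  have h7 : (0 : ℝ) < s + 1 + N := by positivity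
  have h8 : (N : ℝ) + (s + 1) = s + 1 + N := by ring
  rw [h8]
  field_simp

/-- The functional `tⁿ ↦ n! / Γ(βn+1)` is nonnegative on polynomials that are nonnegative on
`[0, ∞)`: it is the limit of the functionals of `rising_nonneg` with `k = s = 0` and `r = N^{-β}`,
divided by `N!`. -/
lemma ml_functional_nonneg {ι : Type*} (S : Finset ι) (b : ι → ℝ) (e : ι → ℕ)
    (hP : ∀ t : ℝ, 0 ≤ t → 0 ≤ ∑ j ∈ S, b j * t ^ e j)
    (β : ℝ) (hβ0 : 0 ≤ β) (hβ1 : β ≤ 1) :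
    0 ≤ ∑ j ∈ S, b j * ((e j).factorial * (1 / Real.Gamma (β * e j + 1))) := by
  have hlim := tendsto_finsetSum S fun j _ =>
    ((tendsto_rising (β * e j) (by positivity)).const_mul ((e j).factorial : ℝ)).const_mul (b j)
  refine ge_of_tendsto' hlim fun N => ?_
  have h := rising_nonneg S b e hP (((N : ℝ) ^ β)⁻¹) (by positivity) β hβ0 hβ1 N 0 0 le_rfl
  have h2 : ∑ j ∈ S, b j * ((e j).factorial * ((∏ i ∈ range N, (β * e j + i + 1)) /
        (N.factorial * (N : ℝ) ^ (β * e j)))) = (N.factorial : ℝ)⁻¹ *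
      ∑ j ∈ S, b j * (((N : ℝ) ^ β)⁻¹) ^ e j * ((e j + 0).factorial : ℝ) *
      ∏ i ∈ range N, (β * e j + (0 : ℕ) + i + 1) := by
    rw [mul_sum]
    refine sum_congr rfl fun j _ => ?_
    rw [Real.rpow_mul (by positivity), Real.rpow_natCast]
    simp
    ring
  rw [h2]
  positivity

/-- `ml_functional_nonneg` for the polynomial `tᵏ T(λt)`, where `T` is the Taylor section of
`e^{-x}` of even degree `2M`. -/
lemma ml_taylor_nonneg (β : ℝ) (hβ0 : 0 ≤ β) (hβ1 : β ≤ 1) (lam : ℝ) (hlam : 0 ≤ lam)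
    (k M : ℕ) :
    0 ≤ ∑ j ∈ range (2 * M + 1), (-lam) ^ j / (j.factorial : ℝ) *
      ((k + j).factorial * (1 / Real.Gamma (β * (k + j : ℕ) + 1))) := by
  refine ml_functional_nonneg (range (2 * M + 1)) (fun j => (-lam) ^ j / (j.factorial : ℝ))
    (fun j => k + j) ?_ β hβ0 hβ1
  intro t ht
  have h := exp_taylor_nonneg M (lam * t) (by positivity)
  have h2 : ∑ j ∈ range (2 * M + 1), (-lam) ^ j / (j.factorial : ℝ) * t ^ (k + j) =
      t ^ k * ∑ j ∈ range (2 * M + 1), (-(lam * t)) ^ j / (j.factorial : ℝ) := by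
    rw [mul_sum]
    refine sum_congr rfl fun j _ => ?_
    rw [← neg_mul, mul_pow, pow_add]; ring
  rw [h2]
  positivity

/-! ### The Mittag-Leffler function as an entire function -/

lemma hasSum_ml (β : ℝ) (hβ : 0 < β) (z : ℂ) :
    HasSum (fun n : ℕ => z ^ n / Complex.Gamma ((β * n + 1 : ℝ) : ℂ)) (mittagLeffler β z) := by
  refine Summable.hasSum (Summable.of_norm ?_)
  refine (summable_ml β hβ ‖z‖ (norm_nonneg z)).congr fun n => ?_
  have : 0 < Real.Gamma (β * n + 1) := Real.Gamma_pos_of_pos (by positivity)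
  rw [Complex.Gamma_ofReal, norm_div, norm_pow, Complex.norm_real, Real.norm_of_nonneg this.le]

lemma differentiable_ml (β : ℝ) (hβ : 0 < β) : Differentiable ℂ (mittagLeffler β) := by
  intro z
  have hopen : IsOpen (Metric.ball (0 : ℂ) (‖z‖ + 1)) := Metric.isOpen_ball
  have hd : DifferentiableOn ℂ (mittagLeffler β) (Metric.ball (0 : ℂ) (‖z‖ + 1)) := by
    refine Complex.differentiableOn_tsum_of_summable_norm
      (summable_ml β hβ (‖z‖ + 1) (by positivity)) ?_ hopen ?_
    · intro n; fun_prop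
    · intro n w hw
      have : 0 < Real.Gamma (β * n + 1) := Real.Gamma_pos_of_pos (by positivity)
      rw [Complex.Gamma_ofReal, norm_div, norm_pow, Complex.norm_real,
        Real.norm_of_nonneg this.le]
      have : ‖w‖ < ‖z‖ + 1 := by simpa using hw
      gcongr
  exact hd.differentiableAt (hopen.mem_nhds (by simp))

lemma contDiff_ml (β : ℝ) (hβ : 0 < β) (n : WithTop ℕ∞) : ContDiff ℂ n (mittagLeffler β) :=
  (differentiable_ml β hβ).contDiff

lemma differentiable_iteratedDeriv_ml (β : ℝ) (hβ : 0 < β) (k : ℕ) :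
    Differentiable ℂ (iteratedDeriv k (mittagLeffler β)) :=
  (contDiff_ml β hβ ⊤).differentiable_iteratedDeriv k (by simp)

/-- Taylor expansion of the entire function `E_β⁽ʲ⁾` about an arbitrary centre. -/
lemma taylor_iteratedDeriv_ml (β : ℝ) (hβ : 0 < β) (j : ℕ) (c z : ℂ) :
    HasSum (fun n : ℕ => (n.factorial : ℂ)⁻¹ * (z - c) ^ n *
      iteratedDeriv (n + j) (mittagLeffler β) c) (iteratedDeriv j (mittagLeffler β) z) := by
  have h := Complex.hasSum_taylorSeries_of_entire (differentiable_iteratedDeriv_ml β hβ j) c z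
  convert! h using 2 with n
  simp only [iteratedDeriv_eq_iterate, Function.iterate_add_apply, smul_eq_mul, mul_assoc]

lemma iteratedDeriv_ml_zero (β : ℝ) (hβ : 0 < β) (j : ℕ) :
    iteratedDeriv j (mittagLeffler β) 0 =
      ((j.factorial * (1 / Real.Gamma (β * j + 1)) : ℝ) : ℂ) := by
  have h1 : HasFPowerSeriesAt (mittagLeffler β) (FormalMultilinearSeries.ofScalars ℂ
      fun n : ℕ => ((1 / Real.Gamma (β * n + 1) : ℝ) : ℂ)) 0 := by
    rw [hasFPowerSeriesAt_iff]
    refine Filter.Eventually.of_forall fun z => ?_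
    convert! hasSum_ml β hβ z using 2 with n
    · rw [FormalMultilinearSeries.coeff_ofScalars, Complex.Gamma_ofReal, smul_eq_mul]
      push_cast
      ring
    · simp
  have h2 : HasFPowerSeriesAt (mittagLeffler β) (FormalMultilinearSeries.ofScalars ℂ
      fun n : ℕ => (n.factorial : ℂ)⁻¹ * iteratedDeriv n (mittagLeffler β) 0) 0 := by
    rw [hasFPowerSeriesAt_iff]
    refine Filter.Eventually.of_forall fun z => ?_
    convert! taylor_iteratedDeriv_ml β hβ 0 0 z using 2 with n
    · rw [FormalMultilinearSeries.coeff_ofScalars, smul_eq_mul, sub_zero, add_zero]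
      ring
    · simp
  have h3 := congrArg (fun p => p.coeff j) (h1.eq_formalMultilinearSeries h2)
  simp only [FormalMultilinearSeries.coeff_ofScalars] at h3
  rw [Complex.ofReal_mul, h3]
  have : (j.factorial : ℂ) ≠ 0 := by exact_mod_cast j.factorial_ne_zero
  push_cast
  field_simp

lemma iteratedDeriv_ml_ofReal (β : ℝ) (hβ : 0 < β) (k : ℕ) :
    ∀ x : ℝ, iteratedDeriv k (mittagLeffler β) (x : ℂ) =
      ((iteratedDeriv k (mittagLefflerR β) x : ℝ) : ℂ) := by
  induction k with
  | zero =>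
    intro x
    simp only [iteratedDeriv_zero, mittagLeffler, mittagLefflerR, Complex.ofReal_tsum]
    refine tsum_congr fun n => ?_
    rw [Complex.Gamma_ofReal]
    push_cast
    rfl
  | succ k ih =>
    intro x
    have hd := (differentiable_iteratedDeriv_ml β hβ k (x : ℂ)).hasDerivAt
    have h1 := hd.real_of_complex
    have h2 := hd.comp_ofReal
    simp only [ih, Complex.ofReal_re] at h1 h2
    have h3 := h2.unique h1.ofReal_comp
    rw [iteratedDeriv_succ, iteratedDeriv_succ, h1.deriv]
    exact h3

/-- Complete monotonicity of `x ↦ E_β(-x)`. The even Taylor sections of `E_β⁽ᵏ⁾` at `0` are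
nonnegative at `-λ` by `ml_taylor_nonneg`, and they converge to `E_β⁽ᵏ⁾(-λ)`. -/
lemma iteratedDeriv_mlR_nonneg (β : ℝ) (hβ0 : 0 < β) (hβ1 : β ≤ 1) (lam : ℝ) (hlam : 0 ≤ lam)
    (k : ℕ) : 0 ≤ iteratedDeriv k (mittagLefflerR β) (-lam) := by
  have h := taylor_iteratedDeriv_ml β hβ0 k 0 ((-lam : ℝ) : ℂ)
  rw [iteratedDeriv_ml_ofReal β hβ0] at h
  have h2 : HasSum (fun j : ℕ => (-lam) ^ j / (j.factorial : ℝ) *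
      ((k + j).factorial * (1 / Real.Gamma (β * (k + j : ℕ) + 1))))
      (iteratedDeriv k (mittagLefflerR β) (-lam)) := by
    rw [← Complex.hasSum_ofReal]
    convert! h using 2 with j
    rw [iteratedDeriv_ml_zero β hβ0, add_comm j k, sub_zero]
    push_cast
    ring
  have h3 := h2.tendsto_sum_nat.comp
    (Filter.tendsto_atTop_mono (f := id) (g := fun M : ℕ => 2 * M + 1)
      (fun M => by simp; omega) Filter.tendsto_id)
  exact ge_of_tendsto' h3 fun M => ml_taylor_nonneg β hβ0.le hβ1 lam hlam k M

/-! ### Integration against the fractional Poisson measure -/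

/-- The mass `(λᵏ/k!) E_β⁽ᵏ⁾(-λ)` at `k` of the fractional Poisson measure, as a real number
(before the truncation by `ENNReal.ofReal`). -/
def fpWeight (lam β : ℝ) (k : ℕ) : ℝ :=
  lam ^ k / k.factorial * iteratedDeriv k (mittagLefflerR β) (-lam)

lemma fpWeight_nonneg (lam β : ℝ) (hlam : 0 < lam) (hβ0 : 0 < β) (hβ1 : β ≤ 1) (k : ℕ) :
    0 ≤ fpWeight lam β k :=
  mul_nonneg (by positivity) (iteratedDeriv_mlR_nonneg β hβ0 hβ1 lam hlam.le k)

/-- The `j`-th factorial moment of the fractional Poisson measure is the `j`-th derivative of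
`z ↦ E_β(λz)` at `0`: it is `λʲ` times the Taylor series of `E_β⁽ʲ⁾` about `-λ`, evaluated
at `0`. -/
lemma hasSum_factorialMoment_s11 (lam β : ℝ) (hβ0 : 0 < β) (j : ℕ) :
    HasSum (fun k : ℕ => (fpWeight lam β k : ℂ) * (k.descFactorial j : ℂ))
      (iteratedDeriv j (fun z : ℂ => mittagLeffler β (lam * z)) 0) := by
  rw [iteratedDeriv_comp_const_mul (contDiff_ml β hβ0 _)]
  simp only [mul_zero]
  have h := (taylor_iteratedDeriv_ml β hβ0 j ((-lam : ℝ) : ℂ) 0).mul_left ((lam : ℂ) ^ j)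
  rw [← hasSum_nat_add_iff' j]
  have h0 : ∑ k ∈ range j, (fpWeight lam β k : ℂ) * (k.descFactorial j : ℂ) = 0 := by
    refine sum_eq_zero fun k hk => ?_
    rw [Nat.descFactorial_of_lt (mem_range.1 hk)]
    simp
  rw [h0, sub_zero]
  convert! h using 2 with i
  rw [iteratedDeriv_ml_ofReal β hβ0, fpWeight]
  have hf : (((i + j).descFactorial j : ℕ) : ℂ) = (i + j).factorial / i.factorial := by
    have := Nat.factorial_mul_descFactorial (Nat.le_add_left j i)
    rw [Nat.add_sub_cancel] at this
    rw [← this]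
    have : (i.factorial : ℂ) ≠ 0 := by exact_mod_cast i.factorial_ne_zero
    push_cast
    field_simp
  rw [hf]
  have h1 : (i.factorial : ℂ) ≠ 0 := by exact_mod_cast i.factorial_ne_zero
  have h2 : ((i + j).factorial : ℂ) ≠ 0 := by exact_mod_cast (i + j).factorial_ne_zero
  push_cast
  rw [pow_add]
  field_simp
  ring

/-- Integration against the fractional Poisson measure is summation against the real weights. This
needs the weights to be nonnegative, so that `ENNReal.ofReal` does not alter them. -/
lemma integral_fracPoisson (lam β : ℝ) (hlam : 0 < lam) (hβ0 : 0 < β) (hβ1 : β ≤ 1)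
    (f : ℝ → ℂ) (a : ℂ) (h : HasSum (fun k : ℕ => (fpWeight lam β k : ℂ) * f k) a) :
    ∫ x, f x ∂(fracPoisson lam β) = a := by
  have hw := fpWeight_nonneg lam β hlam hβ0 hβ1
  have hi : Integrable f (fracPoisson lam β) := by
    refine integrable_sum_dirac (fun i => ENNReal.ofReal_ne_top) ?_
    refine h.summable.norm.congr fun k => ?_
    change _ = (ENNReal.ofReal (fpWeight lam β k)).toReal * ‖f k‖
    rw [ENNReal.toReal_ofReal (hw k), norm_mul, Complex.norm_real, Real.norm_of_nonneg (hw k)]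
  refine (hasSum_integral_measure hi).unique ?_
  convert! h using 2 with k
  rw [integral_smul_measure, integral_dirac]
  change (ENNReal.ofReal (fpWeight lam β k)).toReal • f k = _
  rw [ENNReal.toReal_ofReal (hw k), Complex.real_smul]

/-! ### Generating functions of the Appell system -/

lemma contDiffAt_inv_ml (lam β : ℝ) (hβ0 : 0 < β) (n : WithTop ℕ∞) :
    mittagLeffler β (lam * 0) ≠ 0 ∧
    ContDiffAt ℂ n (fun z : ℂ => (mittagLeffler β (lam * z))⁻¹) 0 := by
  have h0 : mittagLeffler β (lam * 0) ≠ 0 := by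
    have := iteratedDeriv_ml_zero β hβ0 0
    rw [iteratedDeriv_zero] at this
    rw [mul_zero, this]
    simp
  refine ⟨h0, ContDiffAt.inv ?_ h0⟩
  exact ((contDiff_ml β hβ0 n).comp (contDiff_const.mul contDiff_id)).contDiffAt

/-- Since `e^{(x+1) log(1+z)} = (1+z) e^{x log(1+z)}`, each forward difference in `x` multiplies the
generating function by `z`. -/
lemma fwdDiff_iter_genAppell (lam β : ℝ) (hβ0 : 0 < β) (n m : ℕ) :
    ((fwdDiff (1 : ℝ))^[m] fun t : ℝ => genAppell lam β n t) = fun t : ℝ =>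
      iteratedDeriv n (fun z : ℂ => Complex.exp (t * Complex.log (1 + z)) *
        (z ^ m * (mittagLeffler β (lam * z))⁻¹)) 0 := by
  have hE := fun n => (contDiffAt_inv_ml lam β hβ0 n).2
  have hlog : ∀ n : WithTop ℕ∞, ContDiffAt ℂ n (fun z : ℂ => Complex.log (1 + z)) 0 := fun n =>
    ContDiffAt.comp (0 : ℂ) (Complex.contDiffAt_log (by simp [Complex.one_mem_slitPlane]))
      (contDiffAt_const.add contDiffAt_id)
  induction m with
  | zero =>
    ext t
    simp [genAppell, div_eq_mul_inv]
  | succ m ih =>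
    rw [Function.iterate_succ_apply', ih]
    ext t
    rw [fwdDiff, ← iteratedDeriv_fun_sub]
    · refine Filter.EventuallyEq.iteratedDeriv_eq n ?_
      have hne : ∀ᶠ z : ℂ in nhds 0, 1 + z ≠ 0 :=
        (continuous_const.add continuous_id).continuousAt.eventually_ne (by simp)
      filter_upwards [hne] with z hz
      push_cast
      rw [add_mul, one_mul, Complex.exp_add, Complex.exp_log hz]
      ring
    all_goals
      exact (contDiffAt_const.mul (hlog _)).cexp.mul ((contDiffAt_id.pow m).mul (hE _))

lemma iteratedDeriv_one_add_pow (j k : ℕ) :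
    iteratedDeriv j (fun z : ℂ => (1 + z) ^ k) 0 = (k.descFactorial j : ℂ) := by
  rw [iteratedDeriv_comp_const_add j (fun z : ℂ => z ^ k) 1]
  simp

theorem stmt11 (lam β : ℝ) (hlam : 0 < lam) (hβ0 : 0 < β) (hβ1 : β ≤ 1) (n m : ℕ) :
    (∫ x : ℝ, ((fwdDiff (1 : ℝ))^[m] fun t : ℝ => genAppell lam β n t) x
        ∂(fracPoisson lam β)) =
      (n.factorial : ℂ) * (if n = m then 1 else 0) := by
  refine integral_fracPoisson lam β hlam hβ0 hβ1 _ _ ?_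
  obtain ⟨hE0, hE⟩ := contDiffAt_inv_ml lam β hβ0 n
  have hEc : ContDiff ℂ n (fun z : ℂ => mittagLeffler β (lam * z)) :=
    (contDiff_ml β hβ0 n).comp (contDiff_const.mul contDiff_id)
  set h : ℂ → ℂ := fun z => z ^ m * (mittagLeffler β (lam * z))⁻¹ with hh
  have hhc : ContDiffAt ℂ n h 0 := (contDiffAt_id.pow m).mul hE
  -- At `x = k` the generating function is `(1 + z) ^ k h(z)`, expanded by the Leibniz rule.
  have hval : ∀ k : ℕ, ((fwdDiff (1 : ℝ))^[m] fun t : ℝ => genAppell lam β n t) k =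
      ∑ j ∈ range (n + 1), (n.choose j : ℂ) * (k.descFactorial j : ℂ) *
        iteratedDeriv (n - j) h 0 := by
    intro k
    rw [fwdDiff_iter_genAppell lam β hβ0]
    have he : (fun z : ℂ => Complex.exp (((k : ℝ) : ℂ) * Complex.log (1 + z)) * h z) =ᶠ[nhds 0]
        fun z => (1 + z) ^ k * h z := by
      have hne : ∀ᶠ z : ℂ in nhds 0, 1 + z ≠ 0 :=
        (continuous_const.add continuous_id).continuousAt.eventually_ne (by simp)
      filter_upwards [hne] with z hz
      rw [Complex.ofReal_natCast, Complex.exp_nat_mul, Complex.exp_log hz]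
    refine (he.iteratedDeriv_eq n).trans ?_
    rw [iteratedDeriv_fun_mul (by fun_prop) hhc]
    simp only [iteratedDeriv_one_add_pow]
  -- `E_β(λz) h(z) = z ^ m` near `0`, expanded by the Leibniz rule.
  have hres : (n.factorial : ℂ) * (if n = m then 1 else 0) =
      ∑ j ∈ range (n + 1), (n.choose j : ℂ) *
        iteratedDeriv j (fun z : ℂ => mittagLeffler β (lam * z)) 0 *
        iteratedDeriv (n - j) h 0 := by
    rw [← iteratedDeriv_fun_mul hEc.contDiffAt hhc]
    have he : (fun z : ℂ => mittagLeffler β (lam * z) * h z) =ᶠ[nhds 0] fun z => z ^ m := by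
      have hne : ∀ᶠ z : ℂ in nhds 0, mittagLeffler β (lam * z) ≠ 0 :=
        hEc.continuous.continuousAt.eventually_ne hE0
      filter_upwards [hne] with z hz
      simp only [hh]
      field_simp
    rw [he.iteratedDeriv_eq n, iteratedDeriv_fun_pow_zero]
    split_ifs with hnm <;> simp [hnm]
  rw [hres]
  simp only [hval, mul_sum]
  refine hasSum_sum fun j _ => ?_
  have := ((hasSum_factorialMoment_s11 lam β hβ0 j).mul_left (n.choose j : ℂ)).mul_right
    (iteratedDeriv (n - j) h 0)
  convert! this using 2 with k
  ring
end
end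

section
/- Let p, q ∈ ℕ₀ and set r = p + q + 1. For all sequences (Φ_n)_{n∈ℕ₀}, (Ψ_n)_{n∈ℕ₀} ⊂ ℂ, the Cauchy product Θ_n := ∑_{k=0}^n Φ_k Ψ_{n−k} satisfies ∑_{n=0}^∞ 2^{−nr} |Θ_n|² ≤ (∑_{n=0}^∞ 2^{−nq} |Φ_n|²) · (∑_{n=0}^∞ 2^{−np} |Ψ_n|²). (This is the continuity estimate ‖Φ ⋄ Ψ‖_{−r,−1} ≤ ‖Φ‖_{−q,−1} ‖Ψ‖_{−p,−1} for the Wick product on the generalized function space (N)^{−1}_{π_{λ,β}}.) -/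
open scoped ENNReal NNReal

/-!
By Cauchy–Schwarz, `‖Θ n‖² ≤ (n + 1) ∑_{i + j = n} ‖Φ i‖² ‖Ψ j‖²`. The extra factor `2⁻ⁿ` in the
weight `2^{-n(p+q+1)}` absorbs `n + 1 ≤ 2ⁿ`, and `2^{-n(p+q)} ≤ 2^{-iq} 2^{-jp}` when `i + j = n`.
Thus the `n`-th term on the left is at most the `n`-th antidiagonal sum of the double series
obtained by multiplying out the right-hand side. All series live in `ℝ≥0∞`, so they may be
rearranged freely.
-/

lemma two_zpow_neg_natCast (m : ℕ) : (2 : ℝ≥0∞) ^ (-(m : ℤ)) = (2⁻¹ : ℝ≥0∞) ^ m := by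
  rw [ENNReal.zpow_neg, zpow_natCast, ENNReal.inv_pow]

lemma tsum_mul_tsum_eq_tsum_sum_antidiagonal_ennreal (f g : ℕ → ℝ≥0∞) :
    (∑' n, f n) * (∑' n, g n) =
      ∑' n, ∑ x ∈ Finset.HasAntidiagonal.antidiagonal n, f x.1 * g x.2 := by
  calc (∑' n, f n) * (∑' n, g n) = ∑' x : ℕ × ℕ, f x.1 * g x.2 := by
        rw [ENNReal.tsum_prod (f := fun a b => f a * g b), ← ENNReal.tsum_mul_right]
        simp_rw [ENNReal.tsum_mul_left]
    _ = ∑' x : (Σ n : ℕ, Finset.HasAntidiagonal.antidiagonal n), f x.2.1.1 * g x.2.1.2 :=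
        (Equiv.tsum_eq Finset.HasAntidiagonal.sigmaAntidiagonalEquivProd
          (fun x : ℕ × ℕ => f x.1 * g x.2)).symm
    _ = _ := by
        rw [ENNReal.tsum_sigma']
        refine tsum_congr fun n => ?_
        rw [tsum_fintype]
        exact Finset.sum_coe_sort (Finset.HasAntidiagonal.antidiagonal n) (fun x => f x.1 * g x.2)

lemma nnnorm_sum_antidiagonal_sq_le (Φ Ψ : ℕ → ℂ) (n : ℕ) :
    ‖∑ x ∈ Finset.HasAntidiagonal.antidiagonal n, Φ x.1 * Ψ x.2‖₊ ^ 2 ≤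
      (2 : ℝ≥0) ^ n * ∑ x ∈ Finset.HasAntidiagonal.antidiagonal n, ‖Φ x.1‖₊ ^ 2 * ‖Ψ x.2‖₊ ^ 2 := by
  have hcard : ((n + 1 : ℕ) : ℝ≥0) ≤ 2 ^ n := by exact_mod_cast Nat.lt_two_pow_self
  calc ‖∑ x ∈ Finset.HasAntidiagonal.antidiagonal n, Φ x.1 * Ψ x.2‖₊ ^ 2
      ≤ (∑ x ∈ Finset.HasAntidiagonal.antidiagonal n, ‖Φ x.1 * Ψ x.2‖₊) ^ 2 := by
        gcongr
        exact nnnorm_sum_le _ _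
    _ ≤ ((n + 1 : ℕ) : ℝ≥0) * ∑ x ∈ Finset.HasAntidiagonal.antidiagonal n, ‖Φ x.1 * Ψ x.2‖₊ ^ 2 := by
        have h := sq_sum_le_card_mul_sum_sq (s := Finset.HasAntidiagonal.antidiagonal n)
          (f := fun x => ‖Φ x.1 * Ψ x.2‖₊)
        rwa [Finset.Nat.card_antidiagonal] at h
    _ ≤ _ := by
        simp_rw [nnnorm_mul, mul_pow]
        gcongr

theorem stmt13 (p q : ℕ) (Φ Ψ : ℕ → ℂ) :
    (∑' n : ℕ, (2 : ℝ≥0∞) ^ (-(n * (p + q + 1) : ℤ)) *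
        ((‖∑ k ∈ Finset.range (n + 1), Φ k * Ψ (n - k)‖₊ : ℝ≥0∞)) ^ 2) ≤
      (∑' n : ℕ, (2 : ℝ≥0∞) ^ (-(n * q : ℤ)) * ((‖Φ n‖₊ : ℝ≥0∞)) ^ 2) *
        (∑' n : ℕ, (2 : ℝ≥0∞) ^ (-(n * p : ℤ)) * ((‖Ψ n‖₊ : ℝ≥0∞)) ^ 2) := by
  rw [tsum_mul_tsum_eq_tsum_sum_antidiagonal_ennreal]
  refine ENNReal.tsum_le_tsum fun n => ?_
  have hz (a b : ℕ) : (2 : ℝ≥0∞) ^ (-(a * b : ℤ)) = (2⁻¹ : ℝ≥0∞) ^ (a * b) := by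
    rw [← two_zpow_neg_natCast]
    push_cast
    rfl
  have hz' : (2 : ℝ≥0∞) ^ (-(n * (p + q + 1) : ℤ)) =
      (2⁻¹ : ℝ≥0∞) ^ (n * (p + q)) * (2⁻¹ : ℝ≥0∞) ^ n := by
    rw [← pow_add, ← Nat.mul_succ, ← hz]
    push_cast
    rfl
  have hcancel : (2⁻¹ : ℝ≥0∞) ^ n * 2 ^ n = 1 := by
    rw [← mul_pow, ENNReal.inv_mul_cancel (by norm_num) (by norm_num), one_pow]
  have hsq : ((‖∑ x ∈ Finset.HasAntidiagonal.antidiagonal n, Φ x.1 * Ψ x.2‖₊ : ℝ≥0∞)) ^ 2 ≤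
      (2 : ℝ≥0∞) ^ n *
        ∑ x ∈ Finset.HasAntidiagonal.antidiagonal n, (‖Φ x.1‖₊ : ℝ≥0∞) ^ 2 * (‖Ψ x.2‖₊ : ℝ≥0∞) ^ 2 := by
    exact_mod_cast nnnorm_sum_antidiagonal_sq_le Φ Ψ n
  simp_rw [hz]
  rw [hz', ← Finset.Nat.sum_antidiagonal_eq_sum_range_succ (fun i j => Φ i * Ψ j)]
  refine (mul_le_mul_right hsq _).trans ?_
  rw [mul_assoc, ← mul_assoc (2⁻¹ ^ n), hcancel, one_mul, Finset.mul_sum]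
  refine Finset.sum_le_sum fun x hx => ?_
  have hxn : x.1 + x.2 = n := Finset.HasAntidiagonal.mem_antidiagonal.mp hx
  have hexp : x.1 * q + x.2 * p ≤ n * (p + q) := by
    rw [← hxn]
    nlinarith [Nat.zero_le (x.1 * p), Nat.zero_le (x.2 * q)]
  rw [mul_mul_mul_comm, ← pow_add]
  exact mul_le_mul_left (pow_le_pow_right_of_le_one' (by simp) hexp) _
end

section
/- Let κ ∈ [0,1], k = 2/(1+κ), and q ∈ ℕ₀. Let u : ℂ → ℂ be entire with Taylor expansion u(z) = ∑_{n=0}^∞ u_n z^n. Then for every z ∈ ℂ, |u(z)| ≤ (∑_{n=0}^∞ (n!)^{1+κ} 2^{nq} |u_n|²)^{1/2} · exp(2^{−kq/2} |z|^k). -/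
/-! Write `p = 1 + κ ∈ [1, 2]` and `a = 2 ^ (-kq/2) |z| ^ k`, so that `a ^ p = 2 ^ (-q) |z| ^ 2`.
The Cauchy-Schwarz inequality with weights `(n!) ^ p 2 ^ (nq)` bounds `|u z|` by the Hilbert norm
times the square root of `∑ (a ^ n / n!) ^ p`. Since every `a ^ n / n!` is at most `exp a`, and these
terms sum to `exp a`, that series is at most `(exp a) ^ p ≤ (exp a) ^ 2`
(`sum_rpow_exp_terms_le`). The estimate is done on finite partial sums and passed to the limit. -/

/-- The `ℓ¹ ⊆ ℓᵖ` comparison for the exponential series, with `p ≤ 2` used to simplify the bound. -/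
lemma sum_rpow_exp_terms_le {p a : ℝ} (hp1 : 1 ≤ p) (hp2 : p ≤ 2) (ha : 0 ≤ a) (s : Finset ℕ) :
    ∑ n ∈ s, (a ^ n / (n.factorial : ℝ)) ^ p ≤ Real.exp a ^ 2 := by
  have hb0 : ∀ n : ℕ, 0 ≤ a ^ n / (n.factorial : ℝ) := fun n => by positivity
  have hsum : ∑ n ∈ s, a ^ n / (n.factorial : ℝ) ≤ Real.exp a := by
    rw [Real.exp_eq_exp_ℝ, NormedSpace.exp_eq_tsum_div]
    exact (Real.summable_pow_div_factorial a).sum_le_tsum s fun n _ => hb0 n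
  have hterm : ∀ n : ℕ, (a ^ n / (n.factorial : ℝ)) ^ p ≤
      a ^ n / (n.factorial : ℝ) * Real.exp a := by
    intro n
    have hle : a ^ n / (n.factorial : ℝ) ≤ Real.exp a := Real.pow_div_factorial_le_exp a ha n
    have hsplit : (a ^ n / (n.factorial : ℝ)) ^ p =
        a ^ n / (n.factorial : ℝ) * (a ^ n / (n.factorial : ℝ)) ^ (p - 1) := by
      rw [← Real.rpow_one_add' (hb0 n) (by linarith)]
      congr 1
      ring
    rw [hsplit]
    refine mul_le_mul_of_nonneg_left ?_ (hb0 n)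
    calc (a ^ n / (n.factorial : ℝ)) ^ (p - 1) ≤ Real.exp a ^ (p - 1) :=
          Real.rpow_le_rpow (hb0 n) hle (by linarith)
      _ ≤ Real.exp a ^ (1 : ℝ) :=
          Real.rpow_le_rpow_of_exponent_le (Real.one_le_exp ha) (by linarith)
      _ = Real.exp a := Real.rpow_one _
  calc ∑ n ∈ s, (a ^ n / (n.factorial : ℝ)) ^ p
      ≤ ∑ n ∈ s, a ^ n / (n.factorial : ℝ) * Real.exp a := Finset.sum_le_sum fun n _ => hterm n
    _ = (∑ n ∈ s, a ^ n / (n.factorial : ℝ)) * Real.exp a := by rw [Finset.sum_mul]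
    _ ≤ Real.exp a * Real.exp a := mul_le_mul_of_nonneg_right hsum (Real.exp_pos a).le
    _ = Real.exp a ^ 2 := by ring

theorem stmt14 (κ : ℝ) (hκ0 : 0 ≤ κ) (hκ1 : κ ≤ 1) (k : ℝ) (hk : k = 2 / (1 + κ))
    (q : ℕ) (u : ℂ → ℂ) (hu : Differentiable ℂ u) (c : ℕ → ℂ)
    (hc : ∀ z : ℂ, HasSum (fun n : ℕ => c n * z ^ n) (u z))
    (hsum : Summable fun n : ℕ =>
      (n.factorial : ℝ) ^ ((1 : ℝ) + κ) * 2 ^ (n * q) * ‖c n‖ ^ 2) :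
    ∀ z : ℂ, ‖u z‖ ≤
      Real.sqrt (∑' n : ℕ, (n.factorial : ℝ) ^ ((1 : ℝ) + κ) * 2 ^ (n * q) * ‖c n‖ ^ 2) *
        Real.exp ((2 : ℝ) ^ (-(k * q) / 2) * ‖z‖ ^ k) := by
  intro z
  set a : ℝ := (2 : ℝ) ^ (-(k * q) / 2) * ‖z‖ ^ k with ha_def
  have ha : 0 ≤ a := by positivity
  have hp : 0 < 1 + κ := by linarith
  have hap : a ^ (1 + κ) = (2 ^ q)⁻¹ * ‖z‖ ^ 2 := by
    rw [ha_def, Real.mul_rpow (by positivity) (by positivity), ← Real.rpow_mul (by norm_num),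
      ← Real.rpow_mul (norm_nonneg z)]
    have h1 : -(k * q) / 2 * (1 + κ) = -(q : ℝ) := by
      rw [hk]; field_simp
    have h2 : k * (1 + κ) = (2 : ℕ) := by
      rw [hk]; push_cast; field_simp
    rw [h1, h2, Real.rpow_natCast, Real.rpow_neg (by norm_num), Real.rpow_natCast]
  have hweight : ∀ n : ℕ, (n.factorial : ℝ) ^ (1 + κ) * 2 ^ (n * q) *
      (a ^ n / (n.factorial : ℝ)) ^ (1 + κ) = (‖z‖ ^ n) ^ 2 := by
    intro n
    have hf : (0 : ℝ) < (n.factorial : ℝ) ^ (1 + κ) := by positivity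
    have hpow : (a ^ n) ^ (1 + κ) = (a ^ (1 + κ)) ^ n := by
      rw [← Real.rpow_natCast, ← Real.rpow_mul ha, mul_comm, Real.rpow_mul ha, Real.rpow_natCast]
    rw [Real.div_rpow (by positivity) (by positivity), hpow, hap, mul_pow, inv_pow, ← pow_mul,
      ← pow_mul, ← pow_mul, mul_comm q n, mul_comm 2 n]
    field_simp
  refine le_of_tendsto (hc z).norm (Filter.Eventually.of_forall fun s => ?_)
  have hterm : ∀ n : ℕ, ‖c n * z ^ n‖ =
      √((n.factorial : ℝ) ^ (1 + κ) * 2 ^ (n * q) * ‖c n‖ ^ 2) *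
        √((a ^ n / (n.factorial : ℝ)) ^ (1 + κ)) := by
    intro n
    rw [← Real.sqrt_mul (by positivity), mul_right_comm, hweight, ← mul_pow,
      Real.sqrt_sq (by positivity), norm_mul, norm_pow, mul_comm]
  calc ‖∑ n ∈ s, c n * z ^ n‖ ≤ ∑ n ∈ s, ‖c n * z ^ n‖ := norm_sum_le _ _
    _ = ∑ n ∈ s, √((n.factorial : ℝ) ^ (1 + κ) * 2 ^ (n * q) * ‖c n‖ ^ 2) *
        √((a ^ n / (n.factorial : ℝ)) ^ (1 + κ)) := Finset.sum_congr rfl fun n _ => hterm n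
    _ ≤ √(∑ n ∈ s, (n.factorial : ℝ) ^ (1 + κ) * 2 ^ (n * q) * ‖c n‖ ^ 2) *
        √(∑ n ∈ s, (a ^ n / (n.factorial : ℝ)) ^ (1 + κ)) :=
          Real.sum_sqrt_mul_sqrt_le s (fun n => by positivity) (fun n => by positivity)
    _ ≤ _ := by
        refine mul_le_mul (Real.sqrt_le_sqrt ?_) ?_ (Real.sqrt_nonneg _) (Real.sqrt_nonneg _)
        · exact hsum.sum_le_tsum s fun n _ => by positivity
        · exact Real.sqrt_le_iff.2 ⟨(Real.exp_pos a).le,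
            sum_rpow_exp_terms_le (by linarith) (by linarith) ha s⟩
end

section
/- Let κ ∈ [0,1], k = 2/(1+κ), l, q ∈ ℕ₀ with 2^q (k · 2^{−l})^{1+κ} < 1, and let M ≥ 0. Let u : ℂ → ℂ be entire with Taylor expansion u(z) = ∑_{n=0}^∞ u_n z^n, and suppose |u(z)| ≤ M exp(2^{−l} |z|^k) for all z ∈ ℂ. Then ∑_{n=0}^∞ (n!)^{1+κ} 2^{nq} |u_n|² ≤ M² (e√(2π))^{1+κ} ∑_{n=0}^∞ (n+1)² (2^q (k · 2^{−l})^{1+κ})^n < ∞. -/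
/-!
The Cauchy estimate on the circle of radius `R` gives `‖c n‖ ≤ M * exp (A * R ^ k) / R ^ n` with
`A = 2 ^ (-l)`. The right-hand side is minimal for `R ^ k = n / (k * A)`; since `2 / k = 1 + κ`,
squaring yields `‖c n‖ ^ 2 ≤ M ^ 2 * (e * k * A / n) ^ (n * (1 + κ))` (`coeff_sq_le`). A Stirling-type
upper bound `n! ≤ e * (n + 1) * (n / e) ^ n` (`factorial_le`) cancels the factor `(e / n) ^ n`, and
`(n + 1) ^ (1 + κ) ≤ (n + 1) ^ 2` because `κ ≤ 1`. The two series are thus compared term by term;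
the majorant converges since its ratio `2 ^ q * (k * A) ^ (1 + κ)` is less than `1`.
-/

open Real

/-- Cauchy's estimate for the coefficients of an everywhere convergent power series. -/
lemma coeff_norm_le {u : ℂ → ℂ} (hu : Differentiable ℂ u) {c : ℕ → ℂ}
    (hc : ∀ z : ℂ, HasSum (fun n : ℕ => c n * z ^ n) (u z)) {R C : ℝ} (hR : 0 < R)
    (hC : ∀ z : ℂ, ‖z‖ = R → ‖u z‖ ≤ C) (n : ℕ) : ‖c n‖ ≤ C / R ^ n := by
  have h1 : HasFPowerSeriesAt u (FormalMultilinearSeries.ofScalars ℂ c) 0 := by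
    rw [hasFPowerSeriesAt_iff]
    refine Filter.Eventually.of_forall fun z => ?_
    simpa [FormalMultilinearSeries.coeff_ofScalars, mul_comm] using hc z
  have h2 := (hu.analyticAt 0).hasFPowerSeriesAt
  have h3 := congrArg (fun p => p.coeff n) (h1.eq_formalMultilinearSeries h2)
  simp only [FormalMultilinearSeries.coeff_ofScalars] at h3
  have h4 := Complex.norm_iteratedDeriv_le_of_forall_mem_sphere_norm_le (c := 0) n hR
    hu.diffContOnCl (fun z hz => hC z (by simpa using hz))
  have h5 : (0 : ℝ) < n.factorial := by positivity
  rw [h3, norm_div, Complex.norm_natCast, div_le_iff₀ h5]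
  refine h4.trans_eq (by ring)

/-- Follows from the monotonicity of the Stirling sequence `n! / (√(2 n) (n / e) ^ n)`, whose value at
`n = 1` is `e / √2`, and `√n ≤ n + 1`. The form is chosen so that `n = 0` is included. -/
lemma factorial_le (n : ℕ) :
    (n.factorial : ℝ) ≤ exp 1 * (n + 1) * (n / exp 1) ^ n := by
  rcases n with _ | n
  · simp
  have h := Stirling.stirlingSeq'_antitone (Nat.zero_le n)
  simp only [Function.comp, Nat.succ_eq_add_one, zero_add, Stirling.stirlingSeq_one] at h
  rw [Stirling.stirlingSeq, div_le_iff₀ (by positivity)] at h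
  refine h.trans ?_
  have h2 : √(2 * ((n + 1 : ℕ) : ℝ)) = √2 * √((n + 1 : ℕ) : ℝ) := by
    rw [Real.sqrt_mul (by norm_num)]
  have h3 : √((n + 1 : ℕ) : ℝ) ≤ ((n + 1 : ℕ) : ℝ) + 1 := by
    rw [Real.sqrt_le_left (by positivity)]
    nlinarith [(Nat.cast_nonneg (n + 1) : (0 : ℝ) ≤ ((n + 1 : ℕ) : ℝ))]
  calc _ = exp 1 * √((n + 1 : ℕ) : ℝ) * (((n + 1 : ℕ) : ℝ) / exp 1) ^ (n + 1) := by
        rw [h2]; field_simp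
    _ ≤ _ := by gcongr

/-- The squared Cauchy estimate at the optimal radius `R = (n / (k * A)) ^ (1 / k)`, with the powers
of `n` and `e` moved to the left so that `n = 0` is covered; `s` plays the role of `1 + κ`. -/
lemma coeff_sq_le {k s A M : ℝ} (hk : 0 < k) (hs : s * k = 2) (hA : 0 < A)
    {u : ℂ → ℂ} (hu : Differentiable ℂ u) {c : ℕ → ℂ}
    (hc : ∀ z : ℂ, HasSum (fun n : ℕ => c n * z ^ n) (u z))
    (hb : ∀ z : ℂ, ‖u z‖ ≤ M * exp (A * ‖z‖ ^ k)) (n : ℕ) :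
    (((n : ℝ) / exp 1) ^ n) ^ s * ‖c n‖ ^ 2 ≤ M ^ 2 * ((k * A) ^ s) ^ n := by
  rcases Nat.eq_zero_or_pos n with rfl | hn
  -- The optimal radius degenerates to `0`, so the bound at the origin is used directly.
  · have h0 : c 0 = u 0 := by
      have := (hc 0).unique (hasSum_single 0 (fun b hb => by simp [hb]))
      simpa using this.symm
    have h1 := hb 0
    rw [norm_zero, zero_rpow hk.ne', mul_zero, exp_zero, mul_one, ← h0] at h1
    simpa using pow_le_pow_left₀ (norm_nonneg _) h1 2
  have hn' : (0 : ℝ) < n := by exact_mod_cast hn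
  set R : ℝ := (n / (k * A)) ^ (1 / k) with hR
  have hRpos : 0 < R := by positivity
  have hRk : R ^ k = n / (k * A) := by
    rw [hR, ← rpow_mul (by positivity), one_div_mul_cancel hk.ne', rpow_one]
  have h1 := coeff_norm_le hu hc hRpos (C := M * exp (A * R ^ k))
    (fun z hz => by simpa [hz] using hb z) n
  have h2 : ‖c n‖ ^ 2 ≤ (M * exp (A * R ^ k) / R ^ n) ^ 2 := by gcongr
  have hsk : s = 2 / k := by field_simp; exact hs
  have e1 : exp (A * R ^ k) ^ 2 = (exp 1 ^ n) ^ s := by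
    rw [hRk, ← exp_nat_mul, ← exp_nat_mul, ← exp_mul, hsk]
    congr 1; push_cast; field_simp
  have e2 : (R ^ n) ^ 2 = ((n / (k * A)) ^ n) ^ s := by
    rw [← rpow_natCast_mul (by positivity), hR, ← pow_mul, ← rpow_mul_natCast (by positivity), hsk]
    congr 1; push_cast; field_simp
  have e3 : ((k * A) ^ s) ^ n = ((k * A) ^ n) ^ s := by
    rw [← rpow_natCast_mul (by positivity), ← rpow_mul_natCast (by positivity), mul_comm s]
  calc _ ≤ (((n : ℝ) / exp 1) ^ n) ^ s * (M * exp (A * R ^ k) / R ^ n) ^ 2 := by gcongr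
    _ = M ^ 2 * (((n : ℝ) / exp 1) ^ n * exp 1 ^ n / (n / (k * A)) ^ n) ^ s := by
        rw [div_pow (M * _), mul_pow M, e1, e2, div_rpow (by positivity) (by positivity),
          mul_rpow (by positivity) (by positivity)]
        ring
    _ = _ := by
        rw [e3]; congr 2
        rw [div_pow, div_pow]; field_simp

theorem stmt15 (κ k : ℝ) (hκ0 : 0 ≤ κ) (hκ1 : κ ≤ 1) (hk : k = 2 / (1 + κ))
    (l q : ℕ)
    (hx : (2 : ℝ) ^ q * (k * (2 : ℝ) ^ (-(l : ℤ))) ^ ((1 : ℝ) + κ) < 1)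
    (M : ℝ) (hM : 0 ≤ M)
    (u : ℂ → ℂ) (hu : Differentiable ℂ u) (c : ℕ → ℂ)
    (hc : ∀ z : ℂ, HasSum (fun n : ℕ => c n * z ^ n) (u z))
    (hb : ∀ z : ℂ, ‖u z‖ ≤ M * Real.exp ((2 : ℝ) ^ (-(l : ℤ)) * ‖z‖ ^ k)) :
    Summable (fun n : ℕ =>
      (n.factorial : ℝ) ^ ((1 : ℝ) + κ) * 2 ^ (n * q) * ‖c n‖ ^ 2) ∧
    (∑' n : ℕ, (n.factorial : ℝ) ^ ((1 : ℝ) + κ) * 2 ^ (n * q) * ‖c n‖ ^ 2) ≤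
      M ^ 2 * (Real.exp 1 * Real.sqrt (2 * Real.pi)) ^ ((1 : ℝ) + κ) *
        ∑' n : ℕ, ((n : ℝ) + 1) ^ 2 *
          ((2 : ℝ) ^ q * (k * (2 : ℝ) ^ (-(l : ℤ))) ^ ((1 : ℝ) + κ)) ^ n := by
  have hs : (0 : ℝ) < 1 + κ := by linarith
  have hkpos : 0 < k := by rw [hk]; positivity
  have hsk : (1 + κ) * k = 2 := by rw [hk]; field_simp
  have hA : (0 : ℝ) < (2 : ℝ) ^ (-(l : ℤ)) := by positivity
  set A : ℝ := (2 : ℝ) ^ (-(l : ℤ))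
  set s : ℝ := 1 + κ
  set x : ℝ := (2 : ℝ) ^ q * (k * A) ^ s with hxdef
  have hx0 : 0 ≤ x := by positivity
  have hterm : ∀ n : ℕ, (n.factorial : ℝ) ^ s * 2 ^ (n * q) * ‖c n‖ ^ 2 ≤
      M ^ 2 * (exp 1 * √(2 * π)) ^ s * (((n : ℝ) + 1) ^ 2 * x ^ n) := by
    intro n
    have h1 := coeff_sq_le hkpos hsk hA hu hc hb n
    have h2 : (n.factorial : ℝ) ^ s ≤
        exp 1 ^ s * ((n : ℝ) + 1) ^ s * (((n : ℝ) / exp 1) ^ n) ^ s := by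
      rw [← mul_rpow (by positivity) (by positivity), ← mul_rpow (by positivity) (by positivity)]
      exact rpow_le_rpow (by positivity) (factorial_le n) hs.le
    have h3 : ((n : ℝ) + 1) ^ s ≤ ((n : ℝ) + 1) ^ 2 := by
      rw [← rpow_two]
      exact rpow_le_rpow_of_exponent_le (by linarith [n.cast_nonneg (α := ℝ)])
        (by linarith : 1 + κ ≤ 2)
    have h4 : exp 1 ^ s ≤ (exp 1 * √(2 * π)) ^ s := by
      refine rpow_le_rpow (by positivity) (le_mul_of_one_le_right (by positivity) ?_) hs.le
      rw [one_le_sqrt]; linarith [pi_gt_three]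
    calc (n.factorial : ℝ) ^ s * 2 ^ (n * q) * ‖c n‖ ^ 2
        ≤ exp 1 ^ s * ((n : ℝ) + 1) ^ s * (((n : ℝ) / exp 1) ^ n) ^ s * 2 ^ (n * q)
            * ‖c n‖ ^ 2 := by gcongr
      _ = exp 1 ^ s * ((n : ℝ) + 1) ^ s * 2 ^ (n * q)
            * ((((n : ℝ) / exp 1) ^ n) ^ s * ‖c n‖ ^ 2) := by ring
      _ ≤ (exp 1 * √(2 * π)) ^ s * ((n : ℝ) + 1) ^ 2 * 2 ^ (n * q)
            * (M ^ 2 * ((k * A) ^ s) ^ n) := by gcongr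
      _ = _ := by rw [hxdef, mul_pow, ← pow_mul, mul_comm n q]; ring
  have hsum : Summable (fun n : ℕ => ((n : ℝ) + 1) ^ 2 * x ^ n) := by
    have hxn : ‖x‖ < 1 := by rwa [norm_of_nonneg hx0]
    have := ((summable_pow_mul_geometric_of_norm_lt_one 2 hxn).add
      ((summable_pow_mul_geometric_of_norm_lt_one 1 hxn).mul_left 2)).add
      (summable_pow_mul_geometric_of_norm_lt_one 0 hxn)
    refine this.congr fun n => ?_
    ring
  have hsum' := hsum.mul_left (M ^ 2 * (exp 1 * √(2 * π)) ^ s)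
  have hS := Summable.of_nonneg_of_le (fun n => by positivity) hterm hsum'
  refine ⟨hS, ?_⟩
  rw [← tsum_mul_left]
  exact hS.tsum_le_tsum hterm hsum'
end
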